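/- arXiv:2603.29823 — 2 statements merged into one kernel-verified Lean document; each statement's English description precedes it below -/
import Mathlib

section
/- Let s ∈ (0,1), u ∈ C_c^∞(ℝⁿ), and let U be its Caffarelli–Silvestre extension. Assume ∫₀^∞∫_{ℝⁿ} z^{1−2s} ( |∇_x² U(x,z)|² + |∇_x ∂_z U(x,z)|² ) dx dz < ∞. Define Γ₂(u)(x) := ½ Λ^s( Γ₁(u,u) )(x) − Γ₁(u, Λ^s u)(x). Then for every x ∈ ℝⁿ, Γ₂(u)(x) = β_s ∫₀^∞ ( P_z^{(s)} ∗ ( B_z + G_z ) )(x) z^{1−2s} dz, where for each fixed z > 0 and y ∈ ℝⁿ one sets B_z(y) := ½ Λ^s( |∇_x U(·,z)|² )(y) − ∇_x U(y,z) · ∇_x( Λ^s U(·,z) )(y) and G_z(y) := Γ₁( ∂_z U(·,z), ∂_z U(·,z) )(y), with Λ^s and Γ₁ acting in the horizontal variable on each slice. -/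
open MeasureTheory Filter Set
open scoped Topology ENNReal NNReal

noncomputable section

/-- `ℝⁿ` with the Euclidean norm. -/
abbrev En (n : ℕ) := EuclideanSpace ℝ (Fin n)

/-- The normalizing constant `p(n,s) = Γ(n/2+s)/(π^{n/2} Γ(s))` of the Poisson kernel. -/
def pns (n : ℕ) (s : ℝ) : ℝ :=
  Real.Gamma ((n : ℝ) / 2 + s) / (Real.pi ^ ((n : ℝ) / 2) * Real.Gamma s)

/-- The fractional Poisson kernel `P_z^{(s)}(x) = p(n,s) z^{2s} (|x|² + z²)^{-(n+2s)/2}`. -/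
def Pker (n : ℕ) (s z : ℝ) (x : En n) : ℝ :=
  pns n s * z ^ (2 * s) * (‖x‖ ^ 2 + z ^ 2) ^ (-((n : ℝ) + 2 * s) / 2)

/-- Convolution with the fractional Poisson kernel in the first variable, at fixed `z`. -/
def Pconv (n : ℕ) (s z : ℝ) (f : En n → ℝ) (x : En n) : ℝ :=
  ∫ y, Pker n s z (x - y) * f y

/-- The Caffarelli–Silvestre extension `U(x,z) = (P_z^{(s)} ∗ u)(x)`. -/
def CSext (n : ℕ) (s : ℝ) (u : En n → ℝ) (x : En n) (z : ℝ) : ℝ :=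
  Pconv n s z u x

/-- The constant `C(n,s) = 4^s Γ(n/2+s) / (π^{n/2} |Γ(-s)|)`. -/
def Cns (n : ℕ) (s : ℝ) : ℝ :=
  4 ^ s * Real.Gamma ((n : ℝ) / 2 + s) / (Real.pi ^ ((n : ℝ) / 2) * |Real.Gamma (-s)|)

/-- The fractional Laplacian `(-Δ)^s w(x)` as a principal-value singular integral. -/
def fracLap (n : ℕ) (s : ℝ) (w : En n → ℝ) (x : En n) : ℝ :=
  Cns n s * limUnder (𝓝[>] (0 : ℝ))
    (fun ε : ℝ => ∫ y in {y : En n | ε < ‖x - y‖}, (w x - w y) / ‖x - y‖ ^ ((n : ℝ) + 2 * s))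

/-- `Λ^s w := -(-Δ)^s w`. -/
def Lam (n : ℕ) (s : ℝ) (w : En n → ℝ) (x : En n) : ℝ := - fracLap n s w x

/-- The first-order carré du champ `Γ₁(u,v) = ½(Λ^s(uv) - u Λ^s v - v Λ^s u)`. -/
def Gamma1 (n : ℕ) (s : ℝ) (u v : En n → ℝ) (x : En n) : ℝ :=
  (Lam n s (fun y => u y * v y) x - u x * Lam n s v x - v x * Lam n s u x) / 2

/-- The constant `β_s = 2^{2s-1} Γ(s)/Γ(1-s)`. -/
def betaS (s : ℝ) : ℝ := 2 ^ (2 * s - 1) * Real.Gamma s / Real.Gamma (1 - s)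

/-- Partial derivative in the `i`-th coordinate direction. -/
def pd {n : ℕ} (i : Fin n) (f : En n → ℝ) (x : En n) : ℝ :=
  fderiv ℝ f x (EuclideanSpace.single i 1)

/-- The Laplacian in the `x`-variables. -/
def lapX {n : ℕ} (f : En n → ℝ) (x : En n) : ℝ := ∑ i, pd i (pd i f) x

/-- The degenerate operator `L_s W = div_{x,z}(z^{1-2s} ∇̃W)`, written out as
`z^{1-2s} Δ_x W + ∂_z(z^{1-2s} ∂_z W)`. -/
def LsOp {n : ℕ} (s : ℝ) (W : En n → ℝ → ℝ) (x : En n) (z : ℝ) : ℝ :=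
  z ^ (1 - 2 * s) * lapX (fun y => W y z) x
    + deriv (fun t => t ^ (1 - 2 * s) * deriv (W x) t) z


open MeasureTheory Filter Set
open scoped Topology ENNReal NNReal

section

variable {n : ℕ}

/-! ### The classes of functions with bounded partial derivatives -/

/-- `CB k M w`: all partial derivatives up to order `k` exist, are continuous and bounded by `M`. -/
def CB : ℕ → ℝ → (En n → ℝ) → Prop
  | 0, M, w => Continuous w ∧ ∀ x, |w x| ≤ M
  | (k + 1), M, w => Differentiable ℝ w ∧ (∀ x, |w x| ≤ M) ∧ ∀ i, CB k M (pd i w)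

theorem CB.bound {k : ℕ} {M : ℝ} {w : En n → ℝ} (h : CB k M w) (x : En n) : |w x| ≤ M := by
  cases k with
  | zero => exact h.2 x
  | succ k => exact h.2.1 x

theorem CB.nonneg {k : ℕ} {M : ℝ} {w : En n → ℝ} (h : CB k M w) : 0 ≤ M :=
  (abs_nonneg _).trans (h.bound 0)

theorem CB.cont {k : ℕ} {M : ℝ} {w : En n → ℝ} (h : CB k M w) : Continuous w := by
  cases k with
  | zero => exact h.1
  | succ k => exact h.1.continuous

theorem CB.diff {k : ℕ} {M : ℝ} {w : En n → ℝ} (h : CB (k + 1) M w) : Differentiable ℝ w := h.1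

theorem CB.pdr {k : ℕ} {M : ℝ} {w : En n → ℝ} (h : CB (k + 1) M w) (i : Fin n) :
    CB k M (pd i w) := h.2.2 i

theorem CB.down {k : ℕ} {M : ℝ} {w : En n → ℝ} (h : CB (k + 1) M w) : CB k M w := by
  induction k generalizing w with
  | zero => exact ⟨h.cont, h.bound⟩
  | succ k ih => exact ⟨h.1, h.2.1, fun i => ih (h.2.2 i)⟩

theorem CB.le {k l : ℕ} {M : ℝ} {w : En n → ℝ} (h : CB k M w) (hl : l ≤ k) : CB l M w := by
  induction k with
  | zero => obtain rfl : l = 0 := by omega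
            exact h
  | succ k ih =>
    rcases Nat.lt_or_ge k l with h1 | h1
    · obtain rfl : l = k + 1 := by omega
      exact h
    · exact ih h.down h1

theorem CB.mono {k : ℕ} {M N : ℝ} {w : En n → ℝ} (h : CB k M w) (hMN : M ≤ N) : CB k N w := by
  induction k generalizing w with
  | zero => exact ⟨h.1, fun x => (h.2 x).trans hMN⟩
  | succ k ih => exact ⟨h.1, fun x => (h.2.1 x).trans hMN, fun i => ih (h.2.2 i)⟩

theorem pd_add {f g : En n → ℝ} (hf : Differentiable ℝ f) (hg : Differentiable ℝ g) (i : Fin n) :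
    pd i (fun x => f x + g x) = fun x => pd i f x + pd i g x := by
  funext x
  unfold pd
  rw [fderiv_fun_add (hf x) (hg x)]; rfl

theorem pd_mul {f g : En n → ℝ} (hf : Differentiable ℝ f) (hg : Differentiable ℝ g) (i : Fin n) :
    pd i (fun x => f x * g x) = fun x => f x * pd i g x + g x * pd i f x := by
  funext x
  unfold pd
  rw [fderiv_fun_mul (hf x) (hg x)]; rfl

theorem pd_const_mul {f : En n → ℝ} (hf : Differentiable ℝ f) (c : ℝ) (i : Fin n) :
    pd i (fun x => c * f x) = fun x => c * pd i f x := by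
  funext x
  unfold pd
  rw [fderiv_const_mul (hf x)]; rfl

theorem CB.add {k : ℕ} {M N : ℝ} {f g : En n → ℝ} (hf : CB k M f) (hg : CB k N g) :
    CB k (M + N) (fun x => f x + g x) := by
  induction k generalizing f g with
  | zero => exact ⟨hf.1.add hg.1, fun x => (abs_add_le _ _).trans (add_le_add (hf.2 x) (hg.2 x))⟩
  | succ k ih =>
    refine ⟨hf.1.add hg.1, fun x => (abs_add_le _ _).trans (add_le_add (hf.2.1 x) (hg.2.1 x)),
      fun i => ?_⟩
    rw [pd_add hf.1 hg.1]
    exact ih (hf.2.2 i) (hg.2.2 i)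

theorem CB.const_mul {k : ℕ} {M : ℝ} {f : En n → ℝ} (hf : CB k M f) (c : ℝ) :
    CB k (|c| * M) (fun x => c * f x) := by
  have hb : ∀ x, |c * f x| ≤ |c| * M := fun x => by
    rw [abs_mul]; exact mul_le_mul_of_nonneg_left (hf.bound x) (abs_nonneg c)
  induction k generalizing f with
  | zero => exact ⟨continuous_const.mul hf.1, hb⟩
  | succ k ih =>
    refine ⟨hf.1.const_mul c, hb, fun i => ?_⟩
    rw [pd_const_mul hf.1]
    refine ih (hf.2.2 i) fun x => ?_
    rw [abs_mul]; exact mul_le_mul_of_nonneg_left ((hf.2.2 i).bound x) (abs_nonneg c)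

theorem CB.mul {k : ℕ} {M N : ℝ} {f g : En n → ℝ} (hf : CB k M f) (hg : CB k N g) :
    CB k (2 ^ k * (M * N)) (fun x => f x * g x) := by
  have hM := hf.nonneg
  have hN := hg.nonneg
  have hb : ∀ x, |f x * g x| ≤ M * N := fun x => by
    rw [abs_mul]; exact mul_le_mul (hf.bound x) (hg.bound x) (abs_nonneg _) hM
  induction k generalizing f g with
  | zero => simpa using ⟨hf.1.mul hg.1, hb⟩
  | succ k ih =>
    have h1 : (1 : ℝ) ≤ 2 ^ (k + 1) := one_le_pow₀ (by norm_num)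
    refine ⟨hf.1.mul hg.1, fun x => (hb x).trans ?_, fun i => ?_⟩
    · nlinarith [mul_nonneg hM hN]
    · rw [pd_mul hf.1 hg.1]
      have e1 := ih hf.down (hg.2.2 i) (fun x => by
        rw [abs_mul]; exact mul_le_mul (hf.bound x) ((hg.2.2 i).bound x) (abs_nonneg _) hM)
      have e2 := ih (hf.2.2 i) hg.down (fun x => by
        rw [abs_mul]; exact mul_le_mul ((hf.2.2 i).bound x) (hg.bound x) (abs_nonneg _) hM)
      have e3 := e1.add e2
      have e4 : (2 : ℝ) ^ k * (M * N) + 2 ^ k * (M * N) = 2 ^ (k + 1) * (M * N) := by ring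
      rw [e4] at e3
      convert e3 using 2
      ring

theorem CB.zero {k : ℕ} : CB k 0 (fun _ : En n => (0 : ℝ)) := by
  induction k with
  | zero => exact ⟨continuous_const, by simp⟩
  | succ k ih =>
    refine ⟨differentiable_const _, by simp, fun i => ?_⟩
    have : (pd i (fun _ : En n => (0 : ℝ))) = fun _ => 0 := by
      funext x; unfold pd; simp
    rw [this]; exact ih

theorem CB.sum {k : ℕ} {M : ℝ} {ι : Type*} (S : Finset ι) {f : ι → En n → ℝ}
    (hf : ∀ i, CB k M (f i)) : CB k (S.card * M) (fun x => ∑ i ∈ S, f i x) := by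
  classical
  induction S using Finset.induction_on with
  | empty => simpa using CB.zero
  | insert a S ha ih =>
    have := (hf a).add ih
    simp only [Finset.sum_insert ha, Finset.card_insert_of_notMem ha]
    convert this using 1
    push_cast; ring

theorem En.sum_single (v : En n) : v = ∑ i, v i • EuclideanSpace.single i (1 : ℝ) := by
  have := (EuclideanSpace.basisFun (Fin n) ℝ).sum_repr v
  simpa using this.symm

theorem fderiv_apply_eq (f : En n → ℝ) (x v : En n) : fderiv ℝ f x v = ∑ i, v i * pd i f x := by
  conv_lhs => rw [En.sum_single v]
  rw [map_sum]
  simp only [map_smul, smul_eq_mul]; rfl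

theorem fderiv_eq_sum (f : En n → ℝ) (x : En n) :
    fderiv ℝ f x = ∑ i, pd i f x • (EuclideanSpace.proj i : En n →L[ℝ] ℝ) := by
  ext v
  rw [fderiv_apply_eq]
  simp [mul_comm]

theorem norm_fderiv_le {f : En n → ℝ} {x : En n} {M : ℝ} (h : ∀ i, |pd i f x| ≤ M) :
    ‖fderiv ℝ f x‖ ≤ n * M := by
  rw [fderiv_eq_sum]
  refine (norm_sum_le _ _).trans ?_
  have : ∀ i ∈ (Finset.univ : Finset (Fin n)),
      ‖pd i f x • (EuclideanSpace.proj i : En n →L[ℝ] ℝ)‖ ≤ M := by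
    intro i _
    rw [norm_smul]
    have h1 : ‖(EuclideanSpace.proj i : En n →L[ℝ] ℝ)‖ ≤ 1 := by
      refine ContinuousLinearMap.opNorm_le_bound _ zero_le_one fun v => ?_
      rw [one_mul]; exact PiLp.norm_apply_le v i
    calc ‖pd i f x‖ * _ ≤ |pd i f x| * 1 := mul_le_mul_of_nonneg_left h1 (norm_nonneg _)
      _ ≤ M := by simpa using h i
  refine (Finset.sum_le_card_nsmul _ _ _ this).trans ?_
  simp

theorem CB.lip {M : ℝ} {w : En n → ℝ} (h : CB 1 M w) (x y : En n) :
    |w y - w x| ≤ n * M * ‖y - x‖ :=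
  Convex.norm_image_sub_le_of_norm_fderiv_le (s := univ) (𝕜 := ℝ) (fun x _ => h.1 x)
    (fun x _ => norm_fderiv_le fun i => (h.2.2 i).bound x) convex_univ (mem_univ _) (mem_univ _)

/-- Symmetric second difference. -/
def sd (w : En n → ℝ) (x h : En n) : ℝ := w (x + h) + w (x - h) - 2 * w x

theorem CB.sd_le {M : ℝ} {w : En n → ℝ} (hw : CB 2 M w) (x h : En n) :
    |sd w x h| ≤ 2 * n ^ 2 * M * ‖h‖ ^ 2 := by
  have hM := hw.nonneg
  have hd : ∀ t : ℝ, HasDerivAt (fun t : ℝ => w (x + t • h) + w (x - t • h))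
      (fderiv ℝ w (x + t • h) h - fderiv ℝ w (x - t • h) h) t := by
    intro t
    have a1 : HasDerivAt (fun t : ℝ => x + t • h) h t := by
      simpa using ((hasDerivAt_id t).smul_const h).const_add x
    have a2 : HasDerivAt (fun t : ℝ => x - t • h) (-h) t := by
      simpa using ((hasDerivAt_id t).smul_const h).const_sub x
    have b1 := (hw.1 (x + t • h)).hasFDerivAt.comp_hasDerivAt t a1
    have b2 := (hw.1 (x - t • h)).hasFDerivAt.comp_hasDerivAt t a2
    have := b1.add b2
    rw [map_neg, ← sub_eq_add_neg] at this
    exact this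
  have hb : ∀ t ∈ Ico (0 : ℝ) 1,
      ‖fderiv ℝ w (x + t • h) h - fderiv ℝ w (x - t • h) h‖ ≤ 2 * n ^ 2 * M * ‖h‖ ^ 2 := by
    intro t ht
    rw [fderiv_apply_eq, fderiv_apply_eq, ← Finset.sum_sub_distrib]
    refine (norm_sum_le _ _).trans ?_
    have : ∀ i ∈ (Finset.univ : Finset (Fin n)),
        ‖h i * pd i w (x + t • h) - h i * pd i w (x - t • h)‖ ≤ 2 * n * M * ‖h‖ ^ 2 := by
      intro i _
      rw [← mul_sub, norm_mul]
      have l1 := (hw.2.2 i).lip (x - t • h) (x + t • h)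
      have l2 : ‖x + t • h - (x - t • h)‖ ≤ 2 * ‖h‖ := by
        have : x + t • h - (x - t • h) = (2 * t) • h := by
          rw [mul_smul, two_smul]; abel
        rw [this, norm_smul, Real.norm_of_nonneg (by linarith [ht.1])]
        nlinarith [norm_nonneg h, ht.1, ht.2]
      have l3 : ‖h i‖ ≤ ‖h‖ := PiLp.norm_apply_le h i
      calc ‖h i‖ * ‖pd i w (x + t • h) - pd i w (x - t • h)‖
          ≤ ‖h‖ * (n * M * (2 * ‖h‖)) := by
            refine mul_le_mul l3 (l1.trans ?_) (norm_nonneg _) (norm_nonneg _)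
            exact mul_le_mul_of_nonneg_left l2 (by positivity)
        _ = _ := by ring
    refine (Finset.sum_le_card_nsmul _ _ _ this).trans (le_of_eq ?_)
    simp; ring
  have := norm_image_sub_le_of_norm_deriv_le_segment_01'
    (f := fun t : ℝ => w (x + t • h) + w (x - t • h)) (fun t _ => (hd t).hasDerivWithinAt) hb
  simp only [one_smul, zero_smul, add_zero, sub_zero, Real.norm_eq_abs] at this
  unfold sd
  convert this using 2; ring

theorem CB.sd_le' {k : ℕ} {M : ℝ} {w : En n → ℝ} (hw : CB k M w) (x h : En n) :
    |sd w x h| ≤ 4 * M := by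
  have h1 := abs_le.1 (hw.bound (x + h))
  have h2 := abs_le.1 (hw.bound (x - h))
  have h3 := abs_le.1 (hw.bound x)
  unfold sd
  rw [abs_le]; constructor <;> linarith

/-- Constant for the second difference bound. -/
def c0 (n : ℕ) : ℝ := 2 * n ^ 2 + 4

theorem c0_pos (n : ℕ) : 0 < c0 n := by unfold c0; positivity

theorem CB.sd_min {M : ℝ} {w : En n → ℝ} (hw : CB 2 M w) (x h : En n) :
    |sd w x h| ≤ c0 n * M * min 1 (‖h‖ ^ 2) := by
  have hM := hw.nonneg
  unfold c0
  rcases min_cases (1 : ℝ) (‖h‖ ^ 2) with ⟨e, _⟩ | ⟨e, _⟩ <;> rw [e]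
  · refine (hw.sd_le' x h).trans ?_
    have : 0 ≤ (n : ℝ) ^ 2 * M := by positivity
    nlinarith
  · refine (hw.sd_le x h).trans ?_
    have : 0 ≤ M * ‖h‖ ^ 2 := by positivity
    nlinarith

/-! ### Differentiation under the integral -/

theorem CB.integral {α : Type*} [MeasurableSpace α] {μ : Measure α} {f : α → En n → ℝ} {g : α → ℝ}
    {k : ℕ} (hm : ∀ x, AEStronglyMeasurable (fun a => f a x) μ) (hf : ∀ a, CB k (g a) (f a))
    (hg : Integrable g μ) : CB k (∫ a, g a ∂μ) (fun x => ∫ a, f a x ∂μ) ∧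
      (0 < k → ∀ i, pd i (fun x => ∫ a, f a x ∂μ) = fun x => ∫ a, pd i (f a) x ∂μ) := by
  have hb : ∀ (f : α → En n → ℝ) {k : ℕ}, (∀ a, CB k (g a) (f a)) → ∀ x,
      |∫ a, f a x ∂μ| ≤ ∫ a, g a ∂μ := by
    intro f k hf x
    rw [← Real.norm_eq_abs]
    exact norm_integral_le_of_norm_le hg (Eventually.of_forall fun a => by
      rw [Real.norm_eq_abs]; exact (hf a).bound x)
  induction k generalizing f with
  | zero =>
    refine ⟨⟨?_, hb f hf⟩, by simp⟩
    exact continuous_of_dominated hm (fun x => Eventually.of_forall fun a => (hf a).bound x) hg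
      (Eventually.of_forall fun a => (hf a).cont)
  | succ k ih =>
    have hpm : ∀ i x, AEStronglyMeasurable (fun a => pd i (f a) x) μ := by
      intro i x
      refine aestronglyMeasurable_of_tendsto_ae (𝓝[≠] (0 : ℝ))
        (f := fun t a => t⁻¹ • (f a (x + t • EuclideanSpace.single i 1) - f a x)) ?_ ?_
      · intro t
        exact ((hm (x + t • EuclideanSpace.single i 1)).sub (hm x)).const_smul t⁻¹
      · refine Eventually.of_forall fun a => ?_
        have := ((hf a).1 x).hasFDerivAt.hasLineDerivAt (EuclideanSpace.single i 1)
        exact this.tendsto_slope_zero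
    have hfm : ∀ x, AEStronglyMeasurable (fun a => fderiv ℝ (f a) x) μ := by
      intro x
      simp only [fderiv_eq_sum]
      exact Finset.aestronglyMeasurable_fun_sum _ fun i _ => (hpm i x).smul_const _
    have hderiv : ∀ x, HasFDerivAt (fun x => ∫ a, f a x ∂μ) (∫ a, fderiv ℝ (f a) x ∂μ) x := by
      intro x
      refine hasFDerivAt_integral_of_dominated_of_fderiv_le (s := univ) (bound := fun a => n * g a)
        (F := fun x a => f a x) (F' := fun x a => fderiv ℝ (f a) x)
        univ_mem
        (Eventually.of_forall fun y => hm y) ?_ (hfm x) ?_ (hg.const_mul _) ?_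
      · exact hg.mono' (hm x) (Eventually.of_forall fun a => (hf a).bound x)
      · exact Eventually.of_forall fun a x _ => norm_fderiv_le fun i => ((hf a).2.2 i).bound x
      · exact Eventually.of_forall fun a x _ => ((hf a).1 x).hasFDerivAt
    have hpd : ∀ i, pd i (fun x => ∫ a, f a x ∂μ) = fun x => ∫ a, pd i (f a) x ∂μ := by
      intro i
      funext x
      have hi : Integrable (fun a => fderiv ℝ (f a) x) μ :=
        (hg.const_mul n).mono' (hfm x) (Eventually.of_forall fun a =>
          norm_fderiv_le fun i => ((hf a).2.2 i).bound x)
      unfold pd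
      rw [(hderiv x).fderiv, ContinuousLinearMap.integral_apply hi]
    refine ⟨⟨fun x => (hderiv x).differentiableAt, hb f hf, fun i => ?_⟩, fun _ => hpd⟩
    rw [hpd i]
    exact (ih (hpm i) fun a => (hf a).2.2 i).1

theorem pd_translate (f : En n → ℝ) (c : En n) (i : Fin n) :
    pd i (fun x => f (x + c)) = fun x => pd i f (x + c) := by
  funext x; unfold pd
  rw [fderiv_comp_add_right]

theorem CB.translate {k : ℕ} {M : ℝ} {f : En n → ℝ} (hf : CB k M f) (c : En n) :
    CB k M (fun x => f (x + c)) := by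
  induction k generalizing f with
  | zero => exact ⟨hf.1.comp (continuous_add_const c), fun x => hf.2 _⟩
  | succ k ih =>
    refine ⟨hf.1.comp (differentiable_id.add_const c), fun x => hf.2.1 _, fun i => ?_⟩
    rw [pd_translate]; exact ih (hf.2.2 i)

theorem CB.of_smooth {u : En n → ℝ} (hu : ContDiff ℝ (⊤ : ℕ∞) u) (huc : HasCompactSupport u)
    (k : ℕ) : ∃ M, CB k M u := by
  induction k generalizing u with
  | zero =>
    obtain ⟨C, hC⟩ := huc.exists_bound_of_continuous hu.continuous
    exact ⟨C, hu.continuous, hC⟩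
  | succ k ih =>
    obtain ⟨C, hC⟩ := huc.exists_bound_of_continuous hu.continuous
    have hp : ∀ i, ∃ M, CB k M (pd i u) := by
      intro i
      refine ih ?_ ?_
      · exact (hu.fderiv_right (m := (⊤ : ℕ∞)) (by simp)).clm_apply contDiff_const
      · exact huc.fderiv_apply (𝕜 := ℝ) _
    choose M hM using hp
    refine ⟨max C (∑ i, |M i|), hu.differentiable (by simp), fun x => (hC x).trans (le_max_left _ _),
      fun i => (hM i).mono (le_max_of_le_right ?_)⟩
    exact (le_abs_self _).trans (Finset.single_le_sum (f := fun i => |M i|)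
      (fun _ _ => abs_nonneg _) (Finset.mem_univ i))
end

open MeasureTheory Filter Set
open scoped Topology ENNReal NNReal

section

variable {n : ℕ}

/-! ### The fractional Laplacian on `CB 2` -/

/-- The singular kernel. -/
def sk (n : ℕ) (s : ℝ) (h : En n) : ℝ := ‖h‖ ^ (-((n : ℝ) + 2 * s))

theorem sk_nonneg (n : ℕ) (s : ℝ) (h : En n) : 0 ≤ sk n s h := Real.rpow_nonneg (norm_nonneg _) _

theorem sk_meas (n : ℕ) (s : ℝ) : Measurable (sk n s) := measurable_norm.pow_const _

/-- The Lévy weight. -/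
def LW (n : ℕ) (s : ℝ) (h : En n) : ℝ := min 1 (‖h‖ ^ 2) * sk n s h

theorem LW_nonneg (n : ℕ) (s : ℝ) (h : En n) : 0 ≤ LW n s h :=
  mul_nonneg (le_min zero_le_one (by positivity)) (sk_nonneg n s h)

theorem LW_integrable (hn : 1 ≤ n) {s : ℝ} (hs0 : 0 < s) (hs1 : s < 1) :
    Integrable (LW n s) := by
  have : Nonempty (Fin n) := ⟨⟨0, hn⟩⟩
  have : Nontrivial (En n) := inferInstance
  have key := (integrable_fun_norm_addHaar (E := En n) volume
    (f := fun r : ℝ => min 1 (r ^ 2) * r ^ (-((n : ℝ) + 2 * s)))).2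
  refine key ?_
  rw [finrank_euclideanSpace_fin]
  have hU : Ioi (0 : ℝ) = Ioc 0 1 ∪ Ioi 1 := (Ioc_union_Ioi_eq_Ioi zero_le_one).symm
  have hp : ∀ r : ℝ, 0 < r → r ^ (n - 1) = r ^ ((n : ℝ) - 1) := by
    intro r hr
    rw [← Real.rpow_natCast, Nat.cast_sub hn, Nat.cast_one]
  rw [hU]
  refine IntegrableOn.union ?_ ?_
  · have h1 : IntegrableOn (fun r : ℝ => r ^ (1 - 2 * s)) (Ioc 0 1) := by
      have := intervalIntegral.intervalIntegrable_rpow' (a := 0) (b := 1)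
        (r := 1 - 2 * s) (by linarith)
      rwa [intervalIntegrable_iff_integrableOn_Ioc_of_le zero_le_one] at this
    refine h1.congr_fun ?_ measurableSet_Ioc
    intro r hr
    have hr0 : 0 < r := hr.1
    have : min 1 (r ^ 2) = r ^ (2 : ℝ) := by
      rw [min_eq_right (by nlinarith [hr.2]), ← Real.rpow_natCast]; norm_num
    simp only [smul_eq_mul]
    rw [hp r hr0, this, ← Real.rpow_add hr0, ← Real.rpow_add hr0]
    congr 1; ring
  · have h1 : IntegrableOn (fun r : ℝ => r ^ (-1 - 2 * s)) (Ioi 1) :=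
      integrableOn_Ioi_rpow_of_lt (by linarith) one_pos
    refine h1.congr_fun ?_ measurableSet_Ioi
    intro r hr
    have hr1 : 1 < r := hr
    have hr0 : 0 < r := by linarith
    have : min 1 (r ^ 2) = 1 := min_eq_left (by nlinarith)
    simp only [smul_eq_mul]
    rw [hp r hr0, this, one_mul, ← Real.rpow_add hr0]
    congr 1; ring

theorem sd_cont {w : En n → ℝ} (hw : Continuous w) (x : En n) : Continuous (sd w x) := by
  unfold sd; fun_prop

theorem CB.sd_sk_le {s M : ℝ} {w : En n → ℝ} (hw : CB 2 M w) (x h : En n) :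
    ‖sd w x h * sk n s h‖ ≤ c0 n * M * LW n s h := by
  rw [norm_mul, Real.norm_of_nonneg (sk_nonneg n s h), LW, ← mul_assoc]
  exact mul_le_mul_of_nonneg_right (hw.sd_min x h) (sk_nonneg n s h)

theorem CB.sd_sk_integrable (hn : 1 ≤ n) {s : ℝ} (hs0 : 0 < s) (hs1 : s < 1) {M : ℝ}
    {w : En n → ℝ} (hw : CB 2 M w) (x : En n) : Integrable (fun h => sd w x h * sk n s h) :=
  ((LW_integrable hn hs0 hs1).const_mul (c0 n * M)).mono'
    (((sd_cont hw.cont x).measurable.mul (sk_meas n s)).aestronglyMeasurable)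
    (Eventually.of_forall fun h => hw.sd_sk_le x h)

theorem Lam_eq (hn : 1 ≤ n) {s : ℝ} (hs0 : 0 < s) (hs1 : s < 1) {M : ℝ}
    {w : En n → ℝ} (hw : CB 2 M w) (x : En n) :
    Lam n s w x = Cns n s / 2 * ∫ h, sd w x h * sk n s h := by
  have hM := hw.nonneg
  have hset : ∀ ε : ℝ, MeasurableSet {h : En n | ε < ‖h‖} := fun ε =>
    measurableSet_lt measurable_const measurable_norm
  have hmain : ∀ ε : ℝ, 0 < ε →
      (∫ y in {y : En n | ε < ‖x - y‖}, (w x - w y) / ‖x - y‖ ^ ((n : ℝ) + 2 * s)) =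
      ∫ h, (-(1 / 2)) * {h : En n | ε < ‖h‖}.indicator (fun h => sd w x h * sk n s h) h := by
    intro ε hε
    set g : En n → ℝ := {h : En n | ε < ‖h‖}.indicator (fun h => (w x - w (x - h)) * sk n s h)
      with hg
    have e1 : (∫ y in {y : En n | ε < ‖x - y‖}, (w x - w y) / ‖x - y‖ ^ ((n : ℝ) + 2 * s)) =
        ∫ y, g (x - y) := by
      have hms : MeasurableSet {y : En n | ε < ‖x - y‖} :=
        measurableSet_lt measurable_const (by fun_prop)
      rw [← integral_indicator hms]
      refine integral_congr_ae (Eventually.of_forall fun y => ?_)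
      simp only [hg, indicator, mem_ofPred_eq, sub_sub_cancel, sk]
      rw [Real.rpow_neg (norm_nonneg _), div_eq_mul_inv]
    have gint : Integrable g := by
      refine ((LW_integrable hn hs0 hs1).const_mul (2 * M / min 1 (ε ^ 2))).mono' ?_ ?_
      · refine (Measurable.indicator ?_ (hset ε)).aestronglyMeasurable
        have := hw.cont.measurable
        exact (measurable_const.sub (this.comp (measurable_const.sub measurable_id))).mul
          (sk_meas n s)
      · refine Eventually.of_forall fun h => ?_
        have hmin : 0 < min 1 (ε ^ 2) := lt_min one_pos (by positivity)
        by_cases hh : ε < ‖h‖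
        · have hh' : h ∈ {h : En n | ε < ‖h‖} := hh
          rw [hg, indicator_of_mem hh', norm_mul, Real.norm_of_nonneg (sk_nonneg n s h), LW,
            ← mul_assoc]
          refine mul_le_mul_of_nonneg_right ?_ (sk_nonneg n s h)
          have b1 := abs_le.1 (hw.bound x)
          have b2 := abs_le.1 (hw.bound (x - h))
          have b3 : ‖w x - w (x - h)‖ ≤ 2 * M := by
            rw [Real.norm_eq_abs, abs_le]; constructor <;> linarith
          refine b3.trans ?_
          rw [div_mul_eq_mul_div, le_div_iff₀ hmin]
          refine mul_le_mul_of_nonneg_left (min_le_min_left _ ?_) (by positivity)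
          exact pow_le_pow_left₀ hε.le hh.le 2
        · have hh' : h ∉ {h : En n | ε < ‖h‖} := hh
          rw [hg, indicator_of_notMem hh', norm_zero]
          exact mul_nonneg (by positivity) (LW_nonneg n s h)
    have e2 : ∫ y, g (x - y) = ∫ h, g h := integral_sub_left_eq_self g volume x
    have e3 : ∫ h, g (-h) = ∫ h, g h := integral_neg_eq_self g volume
    have e4 : ∫ h, g h = ∫ h, (1 / 2) * (g h + g (-h)) := by
      rw [integral_const_mul, integral_add gint gint.comp_neg, e3]; ring
    rw [e1, e2, e4]
    refine integral_congr_ae (Eventually.of_forall fun h => ?_)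
    simp only [hg, indicator, mem_ofPred_eq, norm_neg, sk, sd, sub_neg_eq_add]
    split_ifs <;> ring
  have hlim : Tendsto (fun ε : ℝ => ∫ y in {y : En n | ε < ‖x - y‖},
      (w x - w y) / ‖x - y‖ ^ ((n : ℝ) + 2 * s)) (𝓝[>] (0 : ℝ))
      (𝓝 (∫ h, (-(1 / 2)) * (sd w x h * sk n s h))) := by
    refine Tendsto.congr' (f₁ := fun ε : ℝ => ∫ h, (-(1 / 2)) *
      {h : En n | ε < ‖h‖}.indicator (fun h => sd w x h * sk n s h) h) ?_ ?_
    · filter_upwards [self_mem_nhdsWithin] with ε hε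
      exact (hmain ε hε).symm
    refine tendsto_integral_filter_of_dominated_convergence (fun h => c0 n * M * LW n s h) ?_ ?_ ?_ ?_
    · refine Eventually.of_forall fun ε => ?_
      refine (Measurable.const_mul (Measurable.indicator ?_ (hset ε)) _).aestronglyMeasurable
      exact (sd_cont hw.cont x).measurable.mul (sk_meas n s)
    · refine Eventually.of_forall fun ε => Eventually.of_forall fun h => ?_
      have b := hw.sd_sk_le (s := s) x h
      rw [norm_mul]
      have b2 : ‖{h : En n | ε < ‖h‖}.indicator (fun h => sd w x h * sk n s h) h‖ ≤
          ‖sd w x h * sk n s h‖ := norm_indicator_le_norm_self _ _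
      have : ‖(-(1 / 2) : ℝ)‖ ≤ 1 := by norm_num
      calc _ ≤ 1 * ‖sd w x h * sk n s h‖ := mul_le_mul this b2 (norm_nonneg _) zero_le_one
        _ ≤ _ := by rw [one_mul]; exact b
    · exact (LW_integrable hn hs0 hs1).const_mul _
    · refine Eventually.of_forall fun h => ?_
      by_cases hh : h = 0
      · subst hh
        have : sd w x 0 = 0 := by unfold sd; simp; ring
        simp [indicator, this]
      · refine tendsto_const_nhds.congr' ?_
        have : ∀ᶠ ε : ℝ in 𝓝[>] 0, ε < ‖h‖ :=
          mem_nhdsWithin_of_mem_nhds (Iio_mem_nhds (norm_pos_iff.2 hh))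
        filter_upwards [this] with ε hε
        rw [indicator_of_mem (by exact hε)]
  unfold Lam fracLap
  rw [hlim.limUnder_eq, integral_const_mul]
  ring

/-- Operator constant for `Lam`. -/
def cL (n : ℕ) (s : ℝ) : ℝ := |Cns n s / 2| * ∫ h, c0 n * LW n s h

theorem cL_nonneg (n : ℕ) (s : ℝ) : 0 ≤ cL n s :=
  mul_nonneg (abs_nonneg _) (integral_nonneg fun h => mul_nonneg (c0_pos n).le (LW_nonneg n s h))

theorem Lam_bound (hn : 1 ≤ n) {s : ℝ} (hs0 : 0 < s) (hs1 : s < 1) {M : ℝ}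
    {w : En n → ℝ} (hw : CB 2 M w) (x : En n) : |Lam n s w x| ≤ cL n s * M := by
  rw [Lam_eq hn hs0 hs1 hw, abs_mul, cL, mul_assoc]
  refine mul_le_mul_of_nonneg_left ?_ (abs_nonneg _)
  rw [mul_comm, ← integral_const_mul]
  refine norm_integral_le_of_norm_le (((LW_integrable hn hs0 hs1).const_mul _).const_mul M)
    (Eventually.of_forall fun h => (hw.sd_sk_le x h).trans (le_of_eq ?_))
  ring

theorem pd_sd {w : En n → ℝ} (hw : Differentiable ℝ w) (h : En n) (i : Fin n) :
    pd i (fun x => sd w x h) = fun x => sd (pd i w) x h := by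
  have e : (fun x => sd w x h) =
      fun x => (w (x + h) + w (x + -h)) + (-2) * w x := by
    funext x; unfold sd; rw [← sub_eq_add_neg]; ring
  have d1 : ∀ c : En n, Differentiable ℝ (fun x => w (x + c)) := fun c =>
    hw.comp (differentiable_id.add_const c)
  rw [e, pd_add (f := fun x => w (x + h) + w (x + -h)) ((d1 _).add (d1 _)) (hw.const_mul _), pd_add (d1 _) (d1 _), pd_const_mul hw,
    pd_translate, pd_translate]
  funext x; unfold sd; simp only [← sub_eq_add_neg]; ring

theorem sd_CB {k : ℕ} {M : ℝ} {w : En n → ℝ} (hw : CB (k + 2) M w) (h : En n) :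
    CB k (c0 n * M * min 1 (‖h‖ ^ 2)) (fun x => sd w x h) := by
  induction k generalizing w with
  | zero =>
    refine ⟨?_, fun x => hw.sd_min x h⟩
    have := hw.cont
    unfold sd; fun_prop
  | succ k ih =>
    have hd := hw.diff
    refine ⟨?_, fun x => (hw.le (by omega)).sd_min x h, fun i => ?_⟩
    · unfold sd
      exact ((hd.comp (differentiable_id.add_const h)).add
        (hd.comp (differentiable_id.sub_const h))).sub (hd.const_mul 2)
    · rw [pd_sd hd]
      exact ih (hw.2.2 i)

theorem Lam_CB (hn : 1 ≤ n) {s : ℝ} (hs0 : 0 < s) (hs1 : s < 1) {k : ℕ} {M : ℝ}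
    {w : En n → ℝ} (hw : CB (k + 2) M w) : CB k (cL n s * M) (Lam n s w) := by
  have e : Lam n s w = fun x => Cns n s / 2 * ∫ h, sk n s h * sd w x h := by
    funext x; rw [Lam_eq hn hs0 hs1 (hw.le (by omega))]
    simp only [mul_comm]
  have h1 : ∀ h, CB k (M * (c0 n * LW n s h)) (fun x => sk n s h * sd w x h) := by
    intro h
    have := (sd_CB hw h).const_mul (sk n s h)
    rw [abs_of_nonneg (sk_nonneg n s h)] at this
    convert this using 1
    unfold LW; ring
  have h2 := (CB.integral (μ := volume) (f := fun h x => sk n s h * sd w x h)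
    (fun x => ((sk_meas n s).mul (sd_cont hw.cont x).measurable).aestronglyMeasurable) h1
    (((LW_integrable hn hs0 hs1).const_mul (c0 n)).const_mul M)).1
  have h3 := h2.const_mul (Cns n s / 2)
  rw [e]
  convert h3 using 1
  rw [integral_const_mul, cL]; ring

theorem pd_Lam (hn : 1 ≤ n) {s : ℝ} (hs0 : 0 < s) (hs1 : s < 1) {M : ℝ}
    {w : En n → ℝ} (hw : CB 3 M w) (i : Fin n) : pd i (Lam n s w) = Lam n s (pd i w) := by
  have e : Lam n s w = fun x => Cns n s / 2 * ∫ h, sk n s h * sd w x h := by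
    funext x; rw [Lam_eq hn hs0 hs1 (hw.le (by omega))]
    simp only [mul_comm]
  have h1 : ∀ h, CB 1 (M * (c0 n * LW n s h)) (fun x => sk n s h * sd w x h) := by
    intro h
    have := (sd_CB (k := 1) hw h).const_mul (sk n s h)
    rw [abs_of_nonneg (sk_nonneg n s h)] at this
    convert this using 1
    unfold LW; ring
  have h2 := (CB.integral (μ := volume) (f := fun h x => sk n s h * sd w x h)
    (fun x => ((sk_meas n s).mul (sd_cont hw.cont x).measurable).aestronglyMeasurable) h1
    (((LW_integrable hn hs0 hs1).const_mul (c0 n)).const_mul M))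
  rw [e, pd_const_mul h2.1.1, h2.2 one_pos]
  funext x
  rw [Lam_eq hn hs0 hs1 (hw.2.2 i)]
  congr 1
  refine integral_congr_ae (Eventually.of_forall fun h => ?_)
  have hd : Differentiable ℝ (fun x => sd w x h) := (sd_CB (k := 1) hw h).1
  simp only
  rw [pd_const_mul hd, pd_sd hw.1]
  ring

theorem Lam_add (hn : 1 ≤ n) {s : ℝ} (hs0 : 0 < s) (hs1 : s < 1) {M N : ℝ}
    {f g : En n → ℝ} (hf : CB 2 M f) (hg : CB 2 N g) (x : En n) :
    Lam n s (fun x => f x + g x) x = Lam n s f x + Lam n s g x := by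
  rw [Lam_eq hn hs0 hs1 hf, Lam_eq hn hs0 hs1 hg, Lam_eq hn hs0 hs1 (hf.add hg), ← mul_add,
    ← integral_add (f := fun h => sd f x h * sk n s h) (hf.sd_sk_integrable hn hs0 hs1 x)
      (hg.sd_sk_integrable hn hs0 hs1 x)]
  congr 1
  refine integral_congr_ae (Eventually.of_forall fun h => ?_)
  simp only [sd]; ring

theorem Lam_const_mul (hn : 1 ≤ n) {s : ℝ} (hs0 : 0 < s) (hs1 : s < 1) {M : ℝ}
    {f : En n → ℝ} (hf : CB 2 M f) (c : ℝ) (x : En n) :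
    Lam n s (fun x => c * f x) x = c * Lam n s f x := by
  rw [Lam_eq hn hs0 hs1 hf, Lam_eq hn hs0 hs1 (hf.const_mul c)]
  have e : ∀ h, sd (fun x => c * f x) x h * sk n s h = c * (sd f x h * sk n s h) := by
    intro h; simp only [sd]; ring
  simp only [e, integral_const_mul]
  ring

theorem Lam_integral (hn : 1 ≤ n) {s : ℝ} (hs0 : 0 < s) (hs1 : s < 1)
    {α : Type*} [MeasurableSpace α] {μ : Measure α} [SFinite μ] {f : α → En n → ℝ} {g : α → ℝ}
    {M : ℝ} (hm : Measurable (Function.uncurry f)) (hf : ∀ᵐ a ∂μ, CB 2 (g a) (f a))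
    (hg : Integrable g μ) (hF : CB 2 M (fun x => ∫ a, f a x ∂μ)) (x : En n) :
    Lam n s (fun x => ∫ a, f a x ∂μ) x = ∫ a, Lam n s (f a) x ∂μ ∧
      Integrable (fun a => Lam n s (f a) x) μ := by
  have hmx : ∀ x, Measurable (fun a => f a x) := fun x =>
    hm.comp (measurable_id.prodMk measurable_const)
  have hfi : ∀ x, Integrable (fun a => f a x) μ := fun x =>
    hg.mono' (hmx x).aestronglyMeasurable (hf.mono fun a ha => ha.bound x)
  have hsd : ∀ h, sd (fun x => ∫ a, f a x ∂μ) x h = ∫ a, sd (f a) x h ∂μ := by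
    intro h
    unfold sd
    rw [integral_sub (f := fun a => f a (x + h) + f a (x - h)) ((hfi _).add (hfi _)) ((hfi _).const_mul 2), integral_add (hfi _) (hfi _),
      integral_const_mul]
  have hmeas : Measurable (fun p : α × En n => sd (f p.1) x p.2 * sk n s p.2) := by
    unfold sd
    have m1 : Measurable (fun p : α × En n => f p.1 (x + p.2)) :=
      hm.comp (measurable_fst.prodMk (measurable_const.add measurable_snd))
    have m2 : Measurable (fun p : α × En n => f p.1 (x - p.2)) :=
      hm.comp (measurable_fst.prodMk (measurable_const.sub measurable_snd))
    have m3 : Measurable (fun p : α × En n => f p.1 x) :=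
      hm.comp (measurable_fst.prodMk measurable_const)
    exact ((m1.add m2).sub (m3.const_mul 2)).mul ((sk_meas n s).comp measurable_snd)
  have hint : Integrable (fun p : α × En n => sd (f p.1) x p.2 * sk n s p.2) (μ.prod volume) := by
    refine (hg.mul_prod ((LW_integrable hn hs0 hs1).const_mul (c0 n))).mono'
      hmeas.aestronglyMeasurable ?_
    have : ∀ᵐ p ∂(μ.prod (volume : Measure (En n))), CB 2 (g p.1) (f p.1) :=
      Measure.quasiMeasurePreserving_fst.ae hf
    filter_upwards [this] with p hp
    refine (hp.sd_sk_le x p.2).trans (le_of_eq ?_)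
    ring
  have hL : ∀ᵐ a ∂μ, Lam n s (f a) x = Cns n s / 2 * ∫ h, sd (f a) x h * sk n s h :=
    hf.mono fun a ha => Lam_eq hn hs0 hs1 ha x
  constructor
  · rw [Lam_eq hn hs0 hs1 hF, integral_congr_ae hL, integral_const_mul]
    congr 1
    rw [integral_integral_swap (f := fun a h => sd (f a) x h * sk n s h) hint]
    refine integral_congr_ae (Eventually.of_forall fun h => ?_)
    simp only
    rw [hsd, integral_mul_const]
  · refine (Integrable.const_mul hint.integral_prod_left (Cns n s / 2)).congr ?_
    filter_upwards [hL] with a ha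
    rw [ha]
end

open MeasureTheory Filter Set
open scoped Topology ENNReal NNReal

section

variable {n : ℕ}

/-! ### Convolution operators -/

/-- Convolution with the kernel `k`. -/
def TT (k w : En n → ℝ) (x : En n) : ℝ := ∫ y, k y * w (x - y)

theorem Pconv_eq (n : ℕ) (s z : ℝ) (f : En n → ℝ) (x : En n) :
    Pconv n s z f x = TT (Pker n s z) f x := by
  unfold Pconv TT
  rw [← integral_sub_left_eq_self (fun y => Pker n s z y * f (x - y)) volume x]
  simp only [sub_sub_cancel]

theorem TT_aux {k w : En n → ℝ} {j : ℕ} {M : ℝ} (hw : CB j M w) (a : En n) :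
    CB j (|k a| * M) (fun x => k a * w (x - a)) := by
  simp only [sub_eq_add_neg]
  exact (hw.translate (-a)).const_mul (k a)

theorem TT_aem {k w : En n → ℝ} (hk : Integrable k) (hw : Continuous w) (x : En n) :
    AEStronglyMeasurable (fun a => k a * w (x - a)) volume :=
  hk.1.mul (hw.comp (continuous_const.sub continuous_id)).aestronglyMeasurable

theorem TT_integrable {k w : En n → ℝ} {j : ℕ} {M : ℝ} (hk : Integrable k) (hw : CB j M w)
    (x : En n) : Integrable (fun y => k y * w (x - y)) := by
  refine (hk.abs.mul_const M).mono' (TT_aem hk hw.cont x) (Eventually.of_forall fun a => ?_)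
  exact (TT_aux (k := k) hw a).bound x

theorem TT_CB {k w : En n → ℝ} {j : ℕ} {M : ℝ} (hk : Integrable k) (hw : CB j M w) :
    CB j ((∫ y, |k y|) * M) (TT k w) := by
  have := (CB.integral (μ := volume) (f := fun a x => k a * w (x - a)) (TT_aem hk hw.cont)
    (TT_aux hw) (hk.abs.mul_const M)).1
  rwa [integral_mul_const] at this

theorem pd_TT {k w : En n → ℝ} {j : ℕ} {M : ℝ} (hk : Integrable k) (hw : CB (j + 1) M w)
    (i : Fin n) : pd i (TT k w) = TT k (pd i w) := by
  have := (CB.integral (μ := volume) (f := fun a x => k a * w (x - a)) (TT_aem hk hw.cont)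
    (TT_aux hw) (hk.abs.mul_const M)).2 (Nat.succ_pos j) i
  refine this.trans ?_
  funext x
  unfold TT
  refine integral_congr_ae (Eventually.of_forall fun a => ?_)
  simp only [sub_eq_add_neg]
  rw [pd_const_mul (hw.translate (-a)).1, pd_translate]

theorem TT_Lam (hn : 1 ≤ n) {s : ℝ} (hs0 : 0 < s) (hs1 : s < 1) {k w : En n → ℝ} {M : ℝ}
    (hk : Integrable k) (hkm : Measurable k) (hw : CB 2 M w) :
    Lam n s (TT k w) = TT k (Lam n s w) := by
  funext x
  have hm : Measurable (Function.uncurry fun a x => k a * w (x - a)) :=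
    (hkm.comp measurable_fst).mul
      (hw.cont.measurable.comp (measurable_snd.sub measurable_fst))
  have := (Lam_integral hn hs0 hs1 (μ := volume) (f := fun a x => k a * w (x - a)) hm
    (Eventually.of_forall (TT_aux hw)) (hk.abs.mul_const M) (TT_CB hk hw) x).1
  refine this.trans ?_
  unfold TT
  refine integral_congr_ae (Eventually.of_forall fun a => ?_)
  simp only
  have hwt : CB 2 M (fun x => w (x - a)) := by
    simpa only [sub_eq_add_neg] using hw.translate (-a)
  rw [Lam_const_mul hn hs0 hs1 hwt, Lam_eq hn hs0 hs1 hwt, Lam_eq hn hs0 hs1 hw]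
  congr 2
  refine integral_congr_ae (Eventually.of_forall fun h => ?_)
  simp only [sd]
  rw [show x + h - a = x - a + h by abel, show x - h - a = x - a - h by abel]

theorem TT_add {k f g : En n → ℝ} {i j : ℕ} {M N : ℝ} (hk : Integrable k) (hf : CB i M f)
    (hg : CB j N g) (x : En n) : TT k (fun y => f y + g y) x = TT k f x + TT k g x := by
  unfold TT
  rw [← integral_add (TT_integrable hk hf x) (TT_integrable hk hg x)]
  simp only [mul_add]

theorem TT_const_mul {k f : En n → ℝ} (c : ℝ) (x : En n) :
    TT k (fun y => c * f y) x = c * TT k f x := by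
  unfold TT
  rw [← integral_const_mul]
  simp only [mul_left_comm]

theorem TT_measurable {k w : ℝ → En n → ℝ} (hk : Measurable (Function.uncurry k))
    (hw : Measurable (Function.uncurry w)) :
    Measurable (Function.uncurry fun z x => TT (k z) (w z) x) := by
  have : StronglyMeasurable (Function.uncurry fun (p : ℝ × En n) (y : En n) =>
      k p.1 y * w p.1 (p.2 - y)) := by
    refine Measurable.stronglyMeasurable ?_
    refine Measurable.mul (f := fun q : (ℝ × En n) × En n => k q.1.1 q.2)
      (g := fun q : (ℝ × En n) × En n => w q.1.1 (q.1.2 - q.2)) ?_ ?_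
    · exact hk.comp ((measurable_fst.comp measurable_fst).prodMk measurable_snd)
    · exact hw.comp ((measurable_fst.comp measurable_fst).prodMk
        ((measurable_snd.comp measurable_fst).sub measurable_snd))
  exact (this.integral_prod_right (ν := (volume : Measure (En n)))).measurable

theorem TT_ibp {K w : En n → ℝ} {M : ℝ} {i : Fin n} (hKd : Differentiable ℝ K)
    (hK : Integrable K) (hK' : Integrable (pd i K)) (hw : CB 1 M w) (x : En n) :
    TT (pd i K) w x = TT K (pd i w) x := by
  have hd : Differentiable ℝ (fun y => w (x - y)) :=
    hw.1.comp (differentiable_id.const_sub x)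
  have hpd : ∀ y, fderiv ℝ (fun y => w (x - y)) y (EuclideanSpace.single i 1) =
      - pd i w (x - y) := by
    intro y
    have h1 : HasFDerivAt (fun y => x - y) (-(ContinuousLinearMap.id ℝ (En n))) y :=
      (hasFDerivAt_id y).const_sub x
    have h2 := ((hw.1 (x - y)).hasFDerivAt.comp y h1).fderiv
    have h3 : fderiv ℝ (fun y => w (x - y)) y = _ := h2
    rw [h3]
    simp [pd]
  have i1 : Integrable (fun y => fderiv ℝ K y (EuclideanSpace.single i 1) * w (x - y)) :=
    TT_integrable hK' hw x
  have i2 : Integrable (fun y => K y * fderiv ℝ (fun y => w (x - y)) y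
      (EuclideanSpace.single i 1)) := by
    simp only [hpd, mul_neg]
    exact (TT_integrable hK (hw.2.2 i) x).neg
  have := integral_mul_fderiv_eq_neg_fderiv_mul_of_integrable i1 i2 (TT_integrable hK hw x)
    (fun y _ => hKd y) (fun y _ => hd y)
  simp only [hpd, mul_neg] at this
  rw [integral_neg, neg_inj] at this
  exact this.symm

theorem TT_even {k w : En n → ℝ} {j : ℕ} {M : ℝ} (hk : Integrable k) (hev : ∀ y, k (-y) = k y)
    (h0 : ∫ y, k y = 0) (hw : CB j M w) (x : En n) :
    TT k w x = (1 / 2) * ∫ y, k y * sd w x y := by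
  have i1 := TT_integrable hk hw x
  have e1 : TT k w x = ∫ y, k y * w (x + y) := by
    unfold TT
    rw [← integral_neg_eq_self]
    simp only [hev, sub_neg_eq_add]
  have i2 : Integrable (fun y => k y * w (x + y)) := by
    have := i1.comp_neg
    simpa only [hev, sub_neg_eq_add] using this
  have e2 : ∫ y, k y * sd w x y = (∫ y, k y * w (x + y)) + (∫ y, k y * w (x - y)) -
      ∫ y, k y * (2 * w x) := by
    rw [← integral_add i2 i1, ← integral_sub (f := fun y => k y * w (x + y) + k y * w (x - y)) (i2.add i1) (hk.mul_const _)]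
    refine integral_congr_ae (Eventually.of_forall fun y => ?_)
    simp only [sd, Pi.add_apply]; ring
  rw [e2, integral_mul_const, h0, ← e1]
  unfold TT; ring

/-- Differentiation of a convolution in a parameter. -/
theorem TT_hasDerivAt {z0 : ℝ} {S : Set ℝ} (hS : S ∈ 𝓝 z0) {k k' a a' : ℝ → En n → ℝ}
    {G : En n → ℝ} {M : ℝ} (hG : Integrable G) (x : En n)
    (hk : ∀ z ∈ S, ∀ y, HasDerivAt (fun z => k z y) (k' z y) z)
    (ha : ∀ z ∈ S, ∀ y, HasDerivAt (fun z => a z y) (a' z y) z)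
    (bk : ∀ z ∈ S, ∀ y, |k z y| ≤ G y) (bk' : ∀ z ∈ S, ∀ y, |k' z y| ≤ G y)
    (ba : ∀ z ∈ S, ∀ y, |a z y| ≤ M) (ba' : ∀ z ∈ S, ∀ y, |a' z y| ≤ M)
    (mk : ∀ z ∈ S, Continuous (k z)) (mk' : Continuous (k' z0))
    (ma : ∀ z ∈ S, Continuous (a z)) (ma' : Continuous (a' z0)) :
    HasDerivAt (fun z => TT (k z) (a z) x) (TT (k' z0) (a z0) x + TT (k z0) (a' z0) x) z0 := by
  have hz0 : z0 ∈ S := mem_of_mem_nhds hS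
  have hsub : Continuous (fun y : En n => x - y) := continuous_const.sub continuous_id
  have hGn : ∀ y, 0 ≤ G y := fun y => (abs_nonneg _).trans (bk z0 hz0 y)
  have hMn : 0 ≤ M := (abs_nonneg _).trans (ba z0 hz0 0)
  have bmul : ∀ {c d : ℝ} {y : En n}, |c| ≤ G y → |d| ≤ M → ‖c * d‖ ≤ M * G y := by
    intro c d y hc hd
    rw [norm_mul, mul_comm M]
    exact mul_le_mul hc hd (abs_nonneg _) (hGn y)
  have i1 : Integrable (fun y => k' z0 y * a z0 (x - y)) :=
    (hG.const_mul M).mono' (mk'.mul ((ma z0 hz0).comp hsub)).aestronglyMeasurable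
      (Eventually.of_forall fun y => bmul (bk' z0 hz0 y) (ba z0 hz0 _))
  have i2 : Integrable (fun y => k z0 y * a' z0 (x - y)) :=
    (hG.const_mul M).mono' ((mk z0 hz0).mul (ma'.comp hsub)).aestronglyMeasurable
      (Eventually.of_forall fun y => bmul (bk z0 hz0 y) (ba' z0 hz0 _))
  have main := (hasDerivAt_integral_of_dominated_loc_of_deriv_le (μ := volume)
    (F := fun z y => k z y * a z (x - y))
    (F' := fun z y => k' z y * a z (x - y) + k z y * a' z (x - y))
    (bound := fun y => M * G y + M * G y) (x₀ := z0) (s := S) hS ?_ ?_ ?_ ?_ ?_ ?_).2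
  · unfold TT
    rw [← integral_add i1 i2]
    exact main
  · filter_upwards [hS] with z hz
    exact ((mk z hz).mul ((ma z hz).comp hsub)).aestronglyMeasurable
  · exact (hG.const_mul M).mono' ((mk z0 hz0).mul ((ma z0 hz0).comp hsub)).aestronglyMeasurable
      (Eventually.of_forall fun y => bmul (bk z0 hz0 y) (ba z0 hz0 _))
  · exact (i1.add i2).1
  · refine Eventually.of_forall fun y z hz => (norm_add_le _ _).trans (add_le_add ?_ ?_)
    · exact bmul (bk' z hz y) (ba z hz _)
    · exact bmul (bk z hz y) (ba' z hz _)
  · exact (hG.const_mul M).add (hG.const_mul M)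
  · exact Eventually.of_forall fun y z hz => (hk z hz y).mul (ha z hz (x - y))
end

open MeasureTheory Filter Set
open scoped Topology ENNReal NNReal

section

variable {n : ℕ}

/-! ### The Poisson kernel -/

/-- The exponent `-(n+2s)/2`. -/
def ee (n : ℕ) (s : ℝ) : ℝ := -((n : ℝ) + 2 * s) / 2

/-- `|y|² + z²`. -/
def rr (z : ℝ) (y : En n) : ℝ := ‖y‖ ^ 2 + z ^ 2

/-- The profile `(|y|² + z²)^{-(n+2s)/2}`. -/
def Gk (n : ℕ) (s z : ℝ) (y : En n) : ℝ := rr z y ^ ee n s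

/-- `z^{1-2s} ∂_z P_z`. -/
def qk (n : ℕ) (s z : ℝ) (y : En n) : ℝ :=
  pns n s * (2 * s * rr z y ^ ee n s + 2 * ee n s * z ^ 2 * rr z y ^ (ee n s - 1))

/-- `∂_z P_z`. -/
def Qk (n : ℕ) (s z : ℝ) (y : En n) : ℝ := z ^ (2 * s - 1) * qk n s z y

/-- `∂_z (z^{1-2s} ∂_z P_z)`. -/
def dqk (n : ℕ) (s z : ℝ) (y : En n) : ℝ :=
  pns n s * (4 * s * ee n s * z * rr z y ^ (ee n s - 1) + 4 * ee n s * z * rr z y ^ (ee n s - 1)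
    + 4 * ee n s * (ee n s - 1) * z ^ 3 * rr z y ^ (ee n s - 2))

theorem rr_pos {z : ℝ} (hz : 0 < z) (y : En n) : 0 < rr z y := by unfold rr; positivity

theorem Pker_eq (n : ℕ) (s z : ℝ) (y : En n) :
    Pker n s z y = pns n s * z ^ (2 * s) * Gk n s z y := rfl

theorem pns_pos {s : ℝ} (hs0 : 0 < s) : 0 < pns n s := by
  unfold pns
  have h1 : 0 < Real.Gamma ((n : ℝ) / 2 + s) := Real.Gamma_pos_of_pos (by positivity)
  have h2 : 0 < Real.Gamma s := Real.Gamma_pos_of_pos hs0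
  positivity

theorem Gk_pos {s z : ℝ} (hz : 0 < z) (y : En n) : 0 < Gk n s z y :=
  Real.rpow_pos_of_pos (rr_pos hz y) _

theorem Pker_pos {s z : ℝ} (hs0 : 0 < s) (hz : 0 < z) (y : En n) : 0 < Pker n s z y := by
  rw [Pker_eq]
  have := pns_pos (n := n) hs0
  have := Gk_pos (n := n) (s := s) hz y
  positivity

theorem rr_hasDerivAt {z : ℝ} (hz : 0 < z) (y : En n) (p : ℝ) :
    HasDerivAt (fun z => rr z y ^ p) (2 * z * p * rr z y ^ (p - 1)) z := by
  have h1 : HasDerivAt (fun z => rr z y) (2 * z) z := by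
    unfold rr
    simpa using (hasDerivAt_pow 2 z).const_add (‖y‖ ^ 2)
  exact h1.rpow_const (Or.inl (rr_pos hz y).ne')

theorem Pker_hasDerivAt {s z : ℝ} (hz : 0 < z) (y : En n) :
    HasDerivAt (fun z => Pker n s z y) (Qk n s z y) z := by
  have h1 := ((Real.hasDerivAt_rpow_const (x := z) (p := 2 * s) (Or.inl hz.ne')).const_mul
    (pns n s)).mul (rr_hasDerivAt hz y (ee n s))
  refine HasDerivAt.congr_deriv h1 ?_
  unfold Qk qk
  have : z ^ (2 * s) = z ^ (2 * s - 1) * z := by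
    rw [← Real.rpow_add_one hz.ne']; congr 1; ring
  rw [this]; ring_nf

theorem qk_hasDerivAt {s z : ℝ} (hz : 0 < z) (y : En n) :
    HasDerivAt (fun z => qk n s z y) (dqk n s z y) z := by
  have h1 := (rr_hasDerivAt hz y (ee n s)).const_mul (2 * s)
  have h2 := ((hasDerivAt_pow 2 z).const_mul (2 * ee n s)).mul (rr_hasDerivAt hz y (ee n s - 1))
  have h3 := (h1.add h2).const_mul (pns n s)
  refine HasDerivAt.congr_deriv h3 ?_
  unfold dqk
  rw [show ee n s - 1 - 1 = ee n s - 2 by ring]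
  simp only [Nat.cast_ofNat, Nat.add_one_sub_one, pow_one]
  ring

theorem rr_pow_hasFDerivAt {z : ℝ} (hz : 0 < z) (p : ℝ) (y : En n) :
    HasFDerivAt (fun y : En n => rr z y ^ p) ((p * rr z y ^ (p - 1)) • (2 • innerSL ℝ y)) y := by
  have h1 : HasFDerivAt (fun y : En n => rr z y) (2 • innerSL ℝ y) y := by
    unfold rr
    exact (hasStrictFDerivAt_norm_sq y).hasFDerivAt.add_const _
  exact h1.rpow_const (Or.inl (rr_pos hz y).ne')

theorem rr_pow_diff {z : ℝ} (hz : 0 < z) (p : ℝ) : Differentiable ℝ (fun y : En n => rr z y ^ p) :=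
  fun y => (rr_pow_hasFDerivAt hz p y).differentiableAt

theorem pd_rr_pow {z : ℝ} (hz : 0 < z) (p : ℝ) (i : Fin n) :
    pd i (fun y : En n => rr z y ^ p) = fun y => 2 * p * (y i * rr z y ^ (p - 1)) := by
  funext y
  unfold pd
  rw [(rr_pow_hasFDerivAt hz p y).fderiv]
  simp [EuclideanSpace.inner_single_right]
  ring

theorem coord_diff (i : Fin n) : Differentiable ℝ (fun y : En n => y i) :=
  (EuclideanSpace.proj i : En n →L[ℝ] ℝ).differentiable

theorem pd_coord (i : Fin n) : pd i (fun y : En n => y i) = fun _ => 1 := by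
  funext y
  unfold pd
  have : fderiv ℝ (fun y : En n => y i) y = (EuclideanSpace.proj i : En n →L[ℝ] ℝ) :=
    (EuclideanSpace.proj i : En n →L[ℝ] ℝ).fderiv
  rw [this]; simp

theorem Pker_diff {s z : ℝ} (hz : 0 < z) : Differentiable ℝ (Pker n s z) :=
  (rr_pow_diff hz (ee n s)).const_mul (pns n s * z ^ (2 * s))

theorem pd_Pker {s z : ℝ} (hz : 0 < z) (i : Fin n) : pd i (Pker n s z) = fun y =>
    (pns n s * z ^ (2 * s) * (2 * ee n s)) * (y i * rr z y ^ (ee n s - 1)) := by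
  have : Pker n s z = fun y => (pns n s * z ^ (2 * s)) * rr z y ^ (ee n s) := rfl
  rw [this, pd_const_mul (rr_pow_diff hz _), pd_rr_pow hz]
  funext y; ring

theorem pd_Pker_diff {s z : ℝ} (hz : 0 < z) (i : Fin n) :
    Differentiable ℝ (pd i (Pker n s z)) := by
  rw [pd_Pker hz]
  exact ((coord_diff i).mul (rr_pow_diff hz _)).const_mul _

theorem pd_pd_Pker {s z : ℝ} (hz : 0 < z) (i : Fin n) : pd i (pd i (Pker n s z)) = fun y =>
    (pns n s * z ^ (2 * s) * (2 * ee n s)) * (rr z y ^ (ee n s - 1) +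
      2 * (ee n s - 1) * (y i ^ 2 * rr z y ^ (ee n s - 2))) := by
  rw [pd_Pker hz, pd_const_mul (f := fun y : En n => y i * rr z y ^ (ee n s - 1))
      ((coord_diff i).mul (rr_pow_diff hz _)),
    pd_mul (coord_diff i) (rr_pow_diff hz _), pd_rr_pow hz, pd_coord]
  funext y
  rw [show ee n s - 1 - 1 = ee n s - 2 by ring]
  ring

theorem rr_pow_sub_one {z : ℝ} (hz : 0 < z) (y : En n) (p : ℝ) :
    rr z y ^ (p - 1) = rr z y ^ p / rr z y := Real.rpow_sub_one (rr_pos hz y).ne' p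

theorem rr_pow_sub_two {z : ℝ} (hz : 0 < z) (y : En n) (p : ℝ) :
    rr z y ^ (p - 2) = rr z y ^ p / rr z y ^ 2 := by
  rw [show p - 2 = p - 1 - 1 by ring, rr_pow_sub_one hz, rr_pow_sub_one hz, div_div, sq]

/-- The kernel solves the extension equation. -/
theorem dqk_eq {s z : ℝ} (hz : 0 < z) (y : En n) :
    dqk n s z y = - (z ^ (1 - 2 * s) * ∑ i, pd i (pd i (Pker n s z)) y) := by
  have hR := rr_pos hz y
  have hn2 : ∑ i, y i ^ 2 = rr z y - z ^ 2 := by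
    unfold rr
    rw [EuclideanSpace.norm_sq_eq]; simp
  have hsum : ∑ i, pd i (pd i (Pker n s z)) y = (pns n s * z ^ (2 * s) * (2 * ee n s)) *
      (n * rr z y ^ (ee n s - 1) + 2 * (ee n s - 1) * ((rr z y - z ^ 2) *
        rr z y ^ (ee n s - 2))) := by
    simp only [pd_pd_Pker hz]
    rw [← Finset.mul_sum, Finset.sum_add_distrib, ← Finset.mul_sum, ← Finset.sum_mul, hn2]
    simp
  have hz1 : z ^ (1 - 2 * s) * z ^ (2 * s) = z := by
    rw [← Real.rpow_add hz]; simp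
  rw [hsum]
  have : z ^ (1 - 2 * s) * ((pns n s * z ^ (2 * s) * (2 * ee n s)) *
      (n * rr z y ^ (ee n s - 1) + 2 * (ee n s - 1) * ((rr z y - z ^ 2) *
        rr z y ^ (ee n s - 2)))) = (z ^ (1 - 2 * s) * z ^ (2 * s)) * (pns n s * (2 * ee n s) *
      (n * rr z y ^ (ee n s - 1) + 2 * (ee n s - 1) * ((rr z y - z ^ 2) *
        rr z y ^ (ee n s - 2)))) := by ring
  rw [this, hz1, rr_pow_sub_one hz, rr_pow_sub_two hz]
  unfold dqk
  rw [rr_pow_sub_one hz, rr_pow_sub_two hz]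
  have hnn : (n : ℝ) = -2 * ee n s - 2 * s := by unfold ee; ring
  rw [hnn]
  field_simp
  ring

theorem ee_neg {s : ℝ} (hs0 : 0 < s) : ee n s < 0 := by
  unfold ee
  have : (0 : ℝ) ≤ n := Nat.cast_nonneg n
  linarith

theorem zsq_le (z : ℝ) (y : En n) : z ^ 2 ≤ rr z y := by unfold rr; nlinarith [sq_nonneg ‖y‖]

theorem nsq_le (z : ℝ) (y : En n) : ‖y‖ ^ 2 ≤ rr z y := by unfold rr; nlinarith [sq_nonneg z]

theorem qk_bound {s z : ℝ} (hs0 : 0 < s) (hz : 0 < z) (y : En n) :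
    |qk n s z y| ≤ (n + 4 * s) * (pns n s * Gk n s z y) := by
  have hR := rr_pos hz y
  have hA := Gk_pos (n := n) (s := s) hz y
  have hp := pns_pos (n := n) hs0
  have he := ee_neg (n := n) hs0
  have e : qk n s z y = (pns n s * Gk n s z y) * (2 * s + 2 * ee n s * (z ^ 2 / rr z y)) := by
    unfold qk Gk
    rw [rr_pow_sub_one hz]; field_simp
  have h1 : z ^ 2 / rr z y ≤ 1 := (div_le_one hR).2 (zsq_le z y)
  have h0 : 0 ≤ z ^ 2 / rr z y := by positivity
  rw [e, abs_mul, abs_of_pos (mul_pos hp hA), mul_comm]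
  refine mul_le_mul_of_nonneg_right ?_ (mul_pos hp hA).le
  have : (n : ℝ) = -2 * ee n s - 2 * s := by unfold ee; ring
  rw [this, abs_le]
  constructor <;> nlinarith

/-- Bound constant for `dqk`. -/
def c3 (n : ℕ) (s : ℝ) : ℝ := |4 * s * ee n s| + |4 * ee n s| + |4 * ee n s * (ee n s - 1)|

theorem dqk_bound {s z : ℝ} (hs0 : 0 < s) (hz : 0 < z) (y : En n) :
    |dqk n s z y| ≤ c3 n s * (z⁻¹ * (pns n s * Gk n s z y)) := by
  have hR := rr_pos hz y
  have hA := Gk_pos (n := n) (s := s) hz y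
  have hp := pns_pos (n := n) hs0
  have e : dqk n s z y = (z⁻¹ * (pns n s * Gk n s z y)) * (4 * s * ee n s * (z ^ 2 / rr z y) +
      4 * ee n s * (z ^ 2 / rr z y) + 4 * ee n s * (ee n s - 1) * (z ^ 2 / rr z y) ^ 2) := by
    unfold dqk Gk
    rw [rr_pow_sub_one hz, rr_pow_sub_two hz]; field_simp
  have h1 : z ^ 2 / rr z y ≤ 1 := (div_le_one hR).2 (zsq_le z y)
  have h0 : 0 ≤ z ^ 2 / rr z y := by positivity
  have hh : 0 < z⁻¹ * (pns n s * Gk n s z y) := by positivity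
  rw [e, abs_mul, abs_of_pos hh, mul_comm]
  refine mul_le_mul_of_nonneg_right ?_ hh.le
  unfold c3
  have k : ∀ a t : ℝ, 0 ≤ t → t ≤ 1 → |a * t| ≤ |a| := fun a t h0 h1 => by
    rw [abs_mul, abs_of_nonneg h0]; nlinarith [abs_nonneg a]
  refine (abs_add_le _ _).trans (add_le_add ((abs_add_le _ _).trans (add_le_add ?_ ?_)) ?_)
  · exact k _ _ h0 h1
  · exact k _ _ h0 h1
  · exact k _ _ (by positivity) (pow_le_one₀ h0 h1)

theorem Qk_bound {s z : ℝ} (hs0 : 0 < s) (hz : 0 < z) (y : En n) :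
    |Qk n s z y| ≤ (n + 4 * s) / z * Pker n s z y := by
  unfold Qk
  rw [abs_mul, abs_of_pos (Real.rpow_pos_of_pos hz _), Pker_eq]
  refine (mul_le_mul_of_nonneg_left (qk_bound hs0 hz y) (Real.rpow_pos_of_pos hz _).le).trans
    (le_of_eq ?_)
  rw [Real.rpow_sub_one hz.ne']
  ring

theorem pd_Pker_bound {s z : ℝ} (hs0 : 0 < s) (hz : 0 < z) (i : Fin n) (y : En n) :
    |pd i (Pker n s z) y| ≤ (n + 4 * s) / z * Pker n s z y := by
  have hR := rr_pos hz y
  have hP := Pker_pos (n := n) hs0 hz y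
  have e : pd i (Pker n s z) y = (Pker n s z y / z) * (2 * ee n s * (y i * z / rr z y)) := by
    rw [pd_Pker hz, Pker_eq, Gk]
    simp only [rr_pow_sub_one hz]; field_simp
  have hPz : 0 < Pker n s z y / z := by positivity
  have h1 : |y i * z / rr z y| ≤ 1 := by
    rw [abs_div, abs_of_pos hR, div_le_one hR, abs_mul, abs_of_pos hz]
    have l3 : |y i| ≤ ‖y‖ := PiLp.norm_apply_le y i
    unfold rr
    nlinarith [sq_nonneg (‖y‖ - z), norm_nonneg y, abs_nonneg (y i)]
  rw [e, abs_mul, abs_of_pos hPz, abs_mul]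
  have he := ee_neg (n := n) hs0
  have : |2 * ee n s| ≤ n + 4 * s := by
    rw [abs_of_neg (by linarith)]
    unfold ee; linarith
  calc Pker n s z y / z * (|2 * ee n s| * |y i * z / rr z y|)
      ≤ Pker n s z y / z * ((n + 4 * s) * 1) := by
        refine mul_le_mul_of_nonneg_left (mul_le_mul this h1 (abs_nonneg _) ?_) hPz.le
        positivity
    _ = _ := by ring

theorem pd_pd_Pker_bound {s z : ℝ} (hs0 : 0 < s) (hz : 0 < z) (i : Fin n) (y : En n) :
    |pd i (pd i (Pker n s z)) y| ≤
      (|2 * ee n s| * (1 + |2 * (ee n s - 1)|) / z ^ 2) * Pker n s z y := by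
  have hR := rr_pos hz y
  have hP := Pker_pos (n := n) hs0 hz y
  have e : pd i (pd i (Pker n s z)) y = (Pker n s z y / z ^ 2) * (2 * ee n s * ((z ^ 2 / rr z y) *
      (1 + 2 * (ee n s - 1) * (y i ^ 2 / rr z y)))) := by
    rw [pd_pd_Pker hz, Pker_eq, Gk]
    simp only [rr_pow_sub_one hz, rr_pow_sub_two hz]; field_simp
  have hPz : 0 < Pker n s z y / z ^ 2 := by positivity
  have h1 : |z ^ 2 / rr z y| ≤ 1 := by
    rw [abs_of_nonneg (by positivity)]
    exact (div_le_one hR).2 (zsq_le z y)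
  have h2 : |y i ^ 2 / rr z y| ≤ 1 := by
    rw [abs_of_nonneg (by positivity), div_le_one hR]
    have l3 : |y i| ≤ ‖y‖ := PiLp.norm_apply_le y i
    have := nsq_le z y
    nlinarith [sq_abs (y i), abs_nonneg (y i)]
  rw [e, abs_mul, abs_of_pos hPz, abs_mul (2 * ee n s), abs_mul (z ^ 2 / rr z y)]
  have h3 : |1 + 2 * (ee n s - 1) * (y i ^ 2 / rr z y)| ≤ 1 + |2 * (ee n s - 1)| := by
    refine (abs_add_le _ _).trans ?_
    rw [abs_one, abs_mul]
    nlinarith [abs_nonneg (2 * (ee n s - 1))]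
  calc Pker n s z y / z ^ 2 * (|2 * ee n s| * (|z ^ 2 / rr z y| *
        |1 + 2 * (ee n s - 1) * (y i ^ 2 / rr z y)|))
      ≤ Pker n s z y / z ^ 2 * (|2 * ee n s| * (1 * (1 + |2 * (ee n s - 1)|))) := by
        gcongr
    _ = _ := by ring

theorem rr_pow_cont {z : ℝ} (hz : 0 < z) (p : ℝ) : Continuous (fun y : En n => rr z y ^ p) :=
  (rr_pow_diff hz p).continuous

theorem Pker_cont {s z : ℝ} (hz : 0 < z) : Continuous (Pker n s z) := (Pker_diff hz).continuous

theorem qk_cont {s z : ℝ} (hz : 0 < z) : Continuous (qk n s z) := by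
  unfold qk
  exact continuous_const.mul ((continuous_const.mul (rr_pow_cont hz _)).add
    (continuous_const.mul (rr_pow_cont hz _)))

theorem Qk_cont {s z : ℝ} (hz : 0 < z) : Continuous (Qk n s z) :=
  continuous_const.mul (qk_cont hz)

theorem dqk_cont {s z : ℝ} (hz : 0 < z) : Continuous (dqk n s z) := by
  unfold dqk
  exact continuous_const.mul (((continuous_const.mul (rr_pow_cont hz _)).add
    (continuous_const.mul (rr_pow_cont hz _))).add (continuous_const.mul (rr_pow_cont hz _)))

theorem pd_pd_Pker_cont {s z : ℝ} (hz : 0 < z) (i : Fin n) :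
    Continuous (pd i (pd i (Pker n s z))) := by
  rw [pd_pd_Pker hz]
  have : Continuous (fun y : En n => y i) := (coord_diff i).continuous
  exact continuous_const.mul ((rr_pow_cont hz _).add
    (continuous_const.mul ((this.pow 2).mul (rr_pow_cont hz _))))

theorem rr_pow_meas (p : ℝ) : Measurable (Function.uncurry fun (z : ℝ) (y : En n) => rr z y ^ p) := by
  unfold rr Function.uncurry
  fun_prop

theorem Pker_meas (n : ℕ) (s : ℝ) : Measurable (Function.uncurry (Pker n s)) := by
  have h := rr_pow_meas (n := n) (ee n s)
  have : Measurable (fun q : ℝ × En n => pns n s * q.1 ^ (2 * s)) := by fun_prop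
  exact this.mul h

theorem Qk_meas (n : ℕ) (s : ℝ) : Measurable (Function.uncurry (Qk n s)) := by
  have h1 := rr_pow_meas (n := n) (ee n s)
  have h2 := rr_pow_meas (n := n) (ee n s - 1)
  have a1 : Measurable (fun q : ℝ × En n => q.1 ^ (2 * s - 1)) := by fun_prop
  have a2 : Measurable (fun q : ℝ × En n => 2 * ee n s * q.1 ^ 2) := by fun_prop
  exact a1.mul (((h1.const_mul (2 * s)).add (a2.mul h2)).const_mul (pns n s))
end

open MeasureTheory Filter Set
open scoped Topology ENNReal NNReal

section

variable {n : ℕ}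

/-! ### Integrals of the kernels -/

theorem gauss_integrable {b : ℝ} (hb : 0 < b) :
    Integrable (fun v : En n => Real.exp (-b * ‖v‖ ^ 2)) := by
  refine Integrable.of_integral_ne_zero ?_
  rw [GaussianFourier.integral_rexp_neg_mul_sq_norm hb]
  have := Real.pi_pos
  positivity

theorem rr_pow_integral {s z : ℝ} (hs0 : 0 < s) (hz : 0 < z) :
    Integrable (fun y : En n => rr z y ^ (-((n : ℝ) / 2 + s))) ∧
    ∫ y : En n, rr z y ^ (-((n : ℝ) / 2 + s)) =
      Real.pi ^ ((n : ℝ) / 2) * Real.Gamma s / Real.Gamma ((n : ℝ) / 2 + s) * z ^ (-(2 * s)) := by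
  set a : ℝ := (n : ℝ) / 2 + s with ha
  have hn0 : (0 : ℝ) ≤ n := Nat.cast_nonneg n
  have ha0 : 0 < a := by rw [ha]; positivity
  have hGa : 0 < Real.Gamma a := Real.Gamma_pos_of_pos ha0
  let f : ℝ → En n → ℝ := fun t y => t ^ (a - 1) * Real.exp (-(rr z y * t))
  have hfe : ∀ t y, f t y = (t ^ (a - 1) * Real.exp (-(z ^ 2 * t))) * Real.exp (-t * ‖y‖ ^ 2) := by
    intro t y
    simp only [f, rr]
    rw [mul_assoc, ← Real.exp_add]; ring_nf
  have hmeas : Measurable (Function.uncurry f) := by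
    simp only [f, rr, Function.uncurry_def]
    fun_prop
  have hint1 : ∀ t ∈ Ioi (0 : ℝ), Integrable (f t) := fun t ht => by
    have : f t = fun y => _ := funext (hfe t)
    rw [this]
    exact (gauss_integrable ht).const_mul _
  have hval : ∀ t ∈ Ioi (0 : ℝ), ∫ y, f t y =
      Real.pi ^ ((n : ℝ) / 2) * (t ^ (s - 1) * Real.exp (-(z ^ 2 * t))) := fun t ht => by
    simp only [hfe]
    rw [integral_const_mul, GaussianFourier.integral_rexp_neg_mul_sq_norm ht,
      Real.div_rpow Real.pi_pos.le (le_of_lt ht)]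
    have : t ^ (a - 1) = t ^ (s - 1) * t ^ ((n : ℝ) / 2) := by
      rw [← Real.rpow_add ht]; congr 1; rw [ha]; ring
    have h2 : t ^ ((n : ℝ) / 2) ≠ 0 := (Real.rpow_pos_of_pos ht _).ne'
    rw [this]
    simp only [finrank_euclideanSpace, Fintype.card_fin]
    field_simp
  have hval1 : ∫ t in Ioi (0 : ℝ), t ^ (s - 1) * Real.exp (-(z ^ 2 * t)) =
      (1 / z ^ 2) ^ s * Real.Gamma s :=
    Real.integral_rpow_mul_exp_neg_mul_Ioi hs0 (by positivity)
  have hGs : 0 < Real.Gamma s := Real.Gamma_pos_of_pos hs0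
  have hi1 : Integrable (fun t => t ^ (s - 1) * Real.exp (-(z ^ 2 * t)))
      (volume.restrict (Ioi (0 : ℝ))) := by
    refine Integrable.of_integral_ne_zero ?_
    rw [hval1]
    positivity
  have hint : Integrable (Function.uncurry f) ((volume.restrict (Ioi (0 : ℝ))).prod volume) := by
    rw [integrable_prod_iff hmeas.aestronglyMeasurable]
    constructor
    · filter_upwards [ae_restrict_mem measurableSet_Ioi] with t ht
      exact hint1 t ht
    · refine (hi1.const_mul (Real.pi ^ ((n : ℝ) / 2))).congr ?_
      filter_upwards [ae_restrict_mem measurableSet_Ioi] with t ht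
      rw [← hval t ht]
      refine integral_congr_ae (Eventually.of_forall fun y => ?_)
      simp only [Function.uncurry, f, Real.norm_eq_abs]
      rw [abs_of_nonneg]
      have : (0 : ℝ) ≤ t := le_of_lt ht
      positivity
  have hin : ∀ y : En n, ∫ t in Ioi (0 : ℝ), f t y = rr z y ^ (-a) * Real.Gamma a := fun y => by
    have := Real.integral_rpow_mul_exp_neg_mul_Ioi ha0 (rr_pos hz y)
    simp only [f]
    rw [this, one_div, Real.inv_rpow (rr_pos hz y).le, Real.rpow_neg (rr_pos hz y).le]
  have hI : Integrable (fun y : En n => rr z y ^ (-a) * Real.Gamma a) := by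
    refine hint.integral_prod_right.congr (Eventually.of_forall fun y => ?_)
    exact hin y
  have hI2 : Integrable (fun y : En n => rr z y ^ (-a)) := by
    refine (hI.mul_const (Real.Gamma a)⁻¹).congr (Eventually.of_forall fun y => ?_)
    simp only
    field_simp
  refine ⟨hI2, ?_⟩
  have hsw := integral_integral_swap hint
  simp only [hin] at hsw
  rw [integral_mul_const, setIntegral_congr_fun measurableSet_Ioi hval, integral_const_mul,
    hval1] at hsw
  have hzz : (1 / z ^ 2) ^ s = z ^ (-(2 * s)) := by
    rw [one_div, Real.inv_rpow (by positivity), ← Real.rpow_natCast, ← Real.rpow_mul hz.le,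
      ← Real.rpow_neg hz.le]
    norm_num
  rw [hzz] at hsw
  rw [eq_div_iff hGa.ne' |>.2 hsw.symm]
  ring

theorem ee_eq (n : ℕ) (s : ℝ) : ee n s = -((n : ℝ) / 2 + s) := by unfold ee; ring

theorem Gk_integrable {s z : ℝ} (hs0 : 0 < s) (hz : 0 < z) : Integrable (Gk n s z) := by
  have := (rr_pow_integral (n := n) hs0 hz).1
  rw [← ee_eq] at this
  exact this

theorem Pker_integrable {s z : ℝ} (hs0 : 0 < s) (hz : 0 < z) : Integrable (Pker n s z) :=
  (Gk_integrable hs0 hz).const_mul _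

theorem Pker_integral {s z : ℝ} (hs0 : 0 < s) (hz : 0 < z) : ∫ y, Pker n s z y = 1 := by
  have h := (rr_pow_integral (n := n) hs0 hz).2
  rw [← ee_eq] at h
  have e : ∀ y : En n, Pker n s z y = (pns n s * z ^ (2 * s)) * rr z y ^ (ee n s) := fun y => rfl
  simp only [e]
  rw [integral_const_mul, h, pns, Real.rpow_neg hz.le]
  have h1 : Real.Gamma ((n : ℝ) / 2 + s) ≠ 0 := (Real.Gamma_pos_of_pos (by positivity)).ne'
  have h2 : Real.Gamma s ≠ 0 := (Real.Gamma_pos_of_pos hs0).ne'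
  have h3 : z ^ (2 * s) ≠ 0 := (Real.rpow_pos_of_pos hz _).ne'
  have h4 : Real.pi ^ ((n : ℝ) / 2) ≠ 0 := (Real.rpow_pos_of_pos Real.pi_pos _).ne'
  field_simp

theorem Pker_abs_integral {s z : ℝ} (hs0 : 0 < s) (hz : 0 < z) : ∫ y, |Pker n s z y| = 1 := by
  rw [← Pker_integral (n := n) hs0 hz]
  simp only [abs_of_pos (Pker_pos hs0 hz _)]

theorem qk_integrable {s z : ℝ} (hs0 : 0 < s) (hz : 0 < z) : Integrable (qk n s z) :=
  (((Gk_integrable hs0 hz).const_mul (pns n s)).const_mul _).mono'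
    (qk_cont hz).aestronglyMeasurable (Eventually.of_forall fun y => qk_bound hs0 hz y)

theorem dqk_integrable {s z : ℝ} (hs0 : 0 < s) (hz : 0 < z) : Integrable (dqk n s z) :=
  ((((Gk_integrable hs0 hz).const_mul (pns n s)).const_mul z⁻¹).const_mul (c3 n s)).mono'
    (dqk_cont hz).aestronglyMeasurable (Eventually.of_forall fun y => dqk_bound hs0 hz y)

theorem Qk_integrable {s z : ℝ} (hs0 : 0 < s) (hz : 0 < z) : Integrable (Qk n s z) :=
  (qk_integrable hs0 hz).const_mul _

theorem pd_Pker_integrable {s z : ℝ} (hs0 : 0 < s) (hz : 0 < z) (i : Fin n) :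
    Integrable (pd i (Pker n s z)) :=
  ((Pker_integrable hs0 hz).const_mul _).mono'
    (pd_Pker_diff hz i).continuous.aestronglyMeasurable
    (Eventually.of_forall fun y => pd_Pker_bound hs0 hz i y)

theorem pd_pd_Pker_integrable {s z : ℝ} (hs0 : 0 < s) (hz : 0 < z) (i : Fin n) :
    Integrable (pd i (pd i (Pker n s z))) :=
  ((Pker_integrable hs0 hz).const_mul _).mono'
    (pd_pd_Pker_cont hz i).aestronglyMeasurable
    (Eventually.of_forall fun y => pd_pd_Pker_bound hs0 hz i y)

theorem Qk_abs_integral {s z : ℝ} (hs0 : 0 < s) (hz : 0 < z) :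
    ∫ y, |Qk n s z y| ≤ (n + 4 * s) / z := by
  refine (integral_mono (Qk_integrable hs0 hz).abs ((Pker_integrable hs0 hz).const_mul _)
    (fun y => Qk_bound hs0 hz y)).trans (le_of_eq ?_)
  rw [integral_const_mul, Pker_integral hs0 hz, mul_one]

theorem pd_Pker_abs_integral {s z : ℝ} (hs0 : 0 < s) (hz : 0 < z) (i : Fin n) :
    ∫ y, |pd i (Pker n s z) y| ≤ (n + 4 * s) / z := by
  refine (integral_mono (pd_Pker_integrable hs0 hz i).abs ((Pker_integrable hs0 hz).const_mul _)
    (fun y => pd_Pker_bound hs0 hz i y)).trans (le_of_eq ?_)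
  rw [integral_const_mul, Pker_integral hs0 hz, mul_one]

theorem qk_integral {s z : ℝ} (hs0 : 0 < s) (hz : 0 < z) : ∫ y, qk n s z y = 0 := by
  obtain ⟨i1, h1⟩ := rr_pow_integral (n := n) hs0 hz
  obtain ⟨i2, h2⟩ := rr_pow_integral (n := n) (s := s + 1) (by linarith) hz
  rw [← ee_eq] at h1 i1
  rw [show -((n : ℝ) / 2 + (s + 1)) = ee n s - 1 by unfold ee; ring] at h2 i2
  unfold qk
  rw [integral_const_mul, integral_add (i1.const_mul _) (i2.const_mul _), integral_const_mul,
    integral_const_mul, h1, h2, ← add_assoc, Real.Gamma_add_one hs0.ne',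
    Real.Gamma_add_one (by positivity)]
  have : z ^ (-(2 * (s + 1))) = z ^ (-(2 * s)) / z ^ 2 := by
    rw [show -(2 * (s + 1)) = -(2 * s) - 2 by ring, Real.rpow_sub hz]
    norm_num
  rw [this, ee_eq]
  have h1 : Real.Gamma ((n : ℝ) / 2 + s) ≠ 0 := (Real.Gamma_pos_of_pos (by positivity)).ne'
  have h5 : (n : ℝ) / 2 + s ≠ 0 := by positivity
  have h6 : (n : ℝ) + 2 * s ≠ 0 := by positivity
  field_simp
  simp

theorem beta_Cns {s : ℝ} (hs0 : 0 < s) (hs1 : s < 1) :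
    betaS s * (2 * s * pns n s) = Cns n s := by
  have hG : Real.Gamma (1 - s) = -s * Real.Gamma (-s) := by
    rw [← Real.Gamma_add_one (neg_ne_zero.2 hs0.ne')]; congr 1; ring
  have hp : 0 < Real.Gamma (1 - s) := Real.Gamma_pos_of_pos (by linarith)
  have hneg : Real.Gamma (-s) < 0 := by nlinarith
  have h2 : Real.Gamma s ≠ 0 := (Real.Gamma_pos_of_pos hs0).ne'
  have h4 : Real.pi ^ ((n : ℝ) / 2) ≠ 0 := (Real.rpow_pos_of_pos Real.pi_pos _).ne'
  have h5 : (4 : ℝ) ^ s = 2 ^ (2 * s - 1) * 2 := by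
    rw [← Real.rpow_add_one (by norm_num), show (2 * s - 1 + 1) = 2 * s by ring,
      Real.rpow_mul (by norm_num)]
    norm_num
  unfold betaS Cns pns
  rw [abs_of_neg hneg, hG, h5]
  have := hneg.ne
  field_simp

theorem betaS_pos {s : ℝ} (hs0 : 0 < s) (hs1 : s < 1) : 0 < betaS s := by
  unfold betaS
  have hp : 0 < Real.Gamma (1 - s) := Real.Gamma_pos_of_pos (by linarith)
  have h2 : 0 < Real.Gamma s := (Real.Gamma_pos_of_pos hs0)
  positivity

theorem sk_eq (s : ℝ) (y : En n) : sk n s y = (‖y‖ ^ 2) ^ ee n s := by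
  unfold sk ee
  rw [← Real.rpow_natCast, ← Real.rpow_mul (norm_nonneg _)]
  congr 1; push_cast; ring

theorem Gk_le_sk {s z : ℝ} (hs0 : 0 < s) {y : En n} (hy : y ≠ 0) : Gk n s z y ≤ sk n s y := by
  rw [sk_eq]
  exact Real.rpow_le_rpow_of_nonpos (by positivity) (nsq_le z y) (ee_neg hs0).le

theorem Gk_le_z {s z : ℝ} (hs0 : 0 < s) (hz : 0 < z) (y : En n) : Gk n s z y ≤ (z ^ 2) ^ ee n s :=
  Real.rpow_le_rpow_of_nonpos (by positivity) (zsq_le z y) (ee_neg hs0).le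

theorem Gk_anti {s z z' : ℝ} (hs0 : 0 < s) (hz : 0 < z) (hzz : z ≤ z') (y : En n) :
    Gk n s z' y ≤ Gk n s z y := by
  refine Real.rpow_le_rpow_of_nonpos (rr_pos hz y) ?_ (ee_neg hs0).le
  unfold rr; gcongr

theorem qk_even (s z : ℝ) (y : En n) : qk n s z (-y) = qk n s z y := by
  unfold qk rr; simp

theorem Pker_even (s z : ℝ) (y : En n) : Pker n s z (-y) = Pker n s z y := by
  unfold Pker; simp
end

open MeasureTheory Filter Set
open scoped Topology ENNReal NNReal

section

variable {n : ℕ}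

/-! ### Estimates and limits -/

theorem TT_even2 {k w : En n → ℝ} {j : ℕ} {M : ℝ} (hk : Integrable k) (hev : ∀ y, k (-y) = k y)
    (hw : CB j M w) (x : En n) :
    TT k w x - (∫ y, k y) * w x = (1 / 2) * ∫ y, k y * sd w x y := by
  have i1 := TT_integrable hk hw x
  have e1 : TT k w x = ∫ y, k y * w (x + y) := by
    unfold TT
    rw [← integral_neg_eq_self]
    simp only [hev, sub_neg_eq_add]
  have i2 : Integrable (fun y => k y * w (x + y)) := by
    have := i1.comp_neg
    simpa only [hev, sub_neg_eq_add] using this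
  have e2 : ∫ y, k y * sd w x y = (∫ y, k y * w (x + y)) + (∫ y, k y * w (x - y)) -
      ∫ y, k y * (2 * w x) := by
    rw [← integral_add i2 i1, ← integral_sub (f := fun y => k y * w (x + y) + k y * w (x - y))
      (i2.add i1) (hk.mul_const _)]
    refine integral_congr_ae (Eventually.of_forall fun y => ?_)
    simp only [sd]; ring
  rw [e2, integral_mul_const, ← e1]
  unfold TT; ring

theorem sd_zero (w : En n → ℝ) (x : En n) : sd w x 0 = 0 := by unfold sd; simp; ring

theorem ker_sd_bound {s c M : ℝ} (hc : 0 ≤ c) {k w : En n → ℝ}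
    (hk : ∀ y, y ≠ 0 → |k y| ≤ c * sk n s y) (hw : CB 2 M w) (x y : En n) :
    ‖k y * sd w x y‖ ≤ (c * (c0 n * M)) * LW n s y := by
  by_cases hy : y = 0
  · subst hy
    rw [sd_zero, mul_zero, norm_zero]
    exact mul_nonneg (mul_nonneg hc (mul_nonneg (c0_pos n).le hw.nonneg)) (LW_nonneg _ _ _)
  · rw [norm_mul]
    calc ‖k y‖ * ‖sd w x y‖ ≤ (c * sk n s y) * (c0 n * M * min 1 (‖y‖ ^ 2)) :=
          mul_le_mul (hk y hy) (hw.sd_min x y) (norm_nonneg _)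
            (mul_nonneg hc (sk_nonneg _ _ _))
      _ = _ := by unfold LW; ring

theorem ker_sd_int (hn : 1 ≤ n) {s : ℝ} (hs0 : 0 < s) (hs1 : s < 1) {c M : ℝ} (hc : 0 ≤ c)
    {k w : En n → ℝ} (hk : ∀ y, y ≠ 0 → |k y| ≤ c * sk n s y) (hw : CB 2 M w) (x : En n) :
    |(1 / 2) * ∫ y, k y * sd w x y| ≤ c * (c0 n * ∫ y, LW n s y) * M := by
  have h := norm_integral_le_of_norm_le ((LW_integrable hn hs0 hs1).const_mul (c * (c0 n * M)))
    (Eventually.of_forall (ker_sd_bound hc hk hw x))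
  rw [integral_const_mul] at h
  rw [abs_mul, abs_of_pos (by norm_num : (0 : ℝ) < 1 / 2)]
  have h0 : 0 ≤ |∫ y, k y * sd w x y| := abs_nonneg _
  rw [Real.norm_eq_abs] at h
  nlinarith

/-- Constant of the kernel estimates. -/
def cq (n : ℕ) (s : ℝ) : ℝ := ((n + 4 * s) * pns n s) * (c0 n * ∫ y, LW n s y)

theorem LWi_nonneg (n : ℕ) (s : ℝ) : 0 ≤ ∫ y, LW n s y := integral_nonneg (LW_nonneg n s)

theorem cq_nonneg {s : ℝ} (hs0 : 0 < s) : 0 ≤ cq n s := by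
  unfold cq
  have := pns_pos (n := n) hs0
  have := LWi_nonneg n s
  have := c0_pos n
  positivity

theorem qk_le_sk {s z : ℝ} (hs0 : 0 < s) (hz : 0 < z) (y : En n) (hy : y ≠ 0) :
    |qk n s z y| ≤ ((n + 4 * s) * pns n s) * sk n s y := by
  have := pns_pos (n := n) hs0
  refine (qk_bound hs0 hz y).trans ?_
  rw [mul_assoc]
  gcongr
  exact Gk_le_sk hs0 hy

theorem Tq_bound (hn : 1 ≤ n) {s : ℝ} (hs0 : 0 < s) (hs1 : s < 1) {z M : ℝ} (hz : 0 < z)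
    {w : En n → ℝ} (hw : CB 2 M w) (x : En n) : |TT (qk n s z) w x| ≤ cq n s * M := by
  have h := TT_even2 (qk_integrable hs0 hz) (qk_even s z) hw x
  rw [qk_integral hs0 hz, zero_mul, sub_zero] at h
  rw [h]
  have := pns_pos (n := n) hs0
  exact ker_sd_int hn hs0 hs1 (by positivity) (qk_le_sk hs0 hz) hw x

theorem Tq_CB (hn : 1 ≤ n) {s : ℝ} (hs0 : 0 < s) (hs1 : s < 1) {z M : ℝ} (hz : 0 < z) {k : ℕ}
    {w : En n → ℝ} (hw : CB (k + 2) M w) : CB k (cq n s * M) (TT (qk n s z) w) := by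
  induction k generalizing w with
  | zero =>
    exact ⟨(TT_CB (qk_integrable hs0 hz) hw).cont, Tq_bound hn hs0 hs1 hz hw⟩
  | succ k ih =>
    refine ⟨(TT_CB (qk_integrable hs0 hz) hw).1,
      Tq_bound hn hs0 hs1 hz (hw.le (by omega)), fun i => ?_⟩
    rw [pd_TT (j := k + 2) (qk_integrable hs0 hz) hw i]
    exact ih (hw.2.2 i)

theorem TP_CB {s z M : ℝ} (hs0 : 0 < s) (hz : 0 < z) {k : ℕ}
    {w : En n → ℝ} (hw : CB k M w) : CB k M (TT (Pker n s z) w) := by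
  have := TT_CB (Pker_integrable hs0 hz) hw
  rwa [Pker_abs_integral hs0 hz, one_mul] at this

theorem TQ_eq (s z : ℝ) (w : En n → ℝ) (x : En n) :
    TT (Qk n s z) w x = z ^ (2 * s - 1) * TT (qk n s z) w x := by
  unfold TT Qk
  rw [← integral_const_mul]
  simp only [mul_assoc]

theorem Tq_eq {s z : ℝ} (hz : 0 < z) (w : En n → ℝ) (x : En n) :
    TT (qk n s z) w x = z ^ (1 - 2 * s) * TT (Qk n s z) w x := by
  rw [TQ_eq, ← mul_assoc, ← Real.rpow_add hz]; simp

theorem TP_rate (hn : 1 ≤ n) {s : ℝ} (hs0 : 0 < s) (hs1 : s < 1) {z M : ℝ} (hz : 0 < z)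
    {w : En n → ℝ} (hw : CB 2 M w) (x : En n) :
    |TT (Pker n s z) w x - w x| ≤ (pns n s * z ^ (2 * s)) * (c0 n * ∫ y, LW n s y) * M := by
  have h := TT_even2 (Pker_integrable hs0 hz) (Pker_even s z) hw x
  rw [Pker_integral hs0 hz, one_mul] at h
  rw [h]
  have hp := pns_pos (n := n) hs0
  have hzz := Real.rpow_pos_of_pos hz (2 * s)
  refine ker_sd_int hn hs0 hs1 (by positivity) (fun y hy => ?_) hw x
  rw [abs_of_pos (Pker_pos hs0 hz y), Pker_eq]
  gcongr
  exact Gk_le_sk hs0 hy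

theorem TP_tendsto (hn : 1 ≤ n) {s : ℝ} (hs0 : 0 < s) (hs1 : s < 1) {M : ℝ}
    {A : ℝ → En n → ℝ} (hA : ∀ z, 0 < z → CB 2 M (A z)) (x : En n) :
    Tendsto (fun z => TT (Pker n s z) (A z) x - A z x) (𝓝[>] 0) (𝓝 0) := by
  have h0 : Tendsto (fun z : ℝ => (pns n s * z ^ (2 * s)) * (c0 n * ∫ y, LW n s y) * M)
      (𝓝[>] 0) (𝓝 0) := by
    have : Tendsto (fun z : ℝ => z ^ (2 * s)) (𝓝[>] 0) (𝓝 0) := by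
      have := (Real.continuousAt_rpow_const 0 (2 * s) (Or.inr (by positivity))).tendsto
      rw [Real.zero_rpow (by positivity)] at this
      exact this.mono_left nhdsWithin_le_nhds
    have h2 := ((this.const_mul (pns n s)).mul_const (c0 n * ∫ y, LW n s y)).mul_const M
    simpa using h2
  refine squeeze_zero_norm' ?_ h0
  filter_upwards [self_mem_nhdsWithin] with z hz
  exact TP_rate hn hs0 hs1 hz (hA z hz) x

theorem TP_tendsto' (hn : 1 ≤ n) {s : ℝ} (hs0 : 0 < s) (hs1 : s < 1) {M : ℝ}
    {w : En n → ℝ} (hw : CB 2 M w) (x : En n) :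
    Tendsto (fun z => TT (Pker n s z) w x) (𝓝[>] 0) (𝓝 (w x)) := by
  have := (TP_tendsto hn hs0 hs1 (fun _ _ => hw) x).add_const (w x)
  simpa using this

theorem qk_tendsto {s : ℝ} (y : En n) (hy : y ≠ 0) :
    Tendsto (fun z => qk n s z y) (𝓝[>] 0) (𝓝 (2 * s * pns n s * sk n s y)) := by
  have hpos : 0 < rr 0 y := by unfold rr; positivity
  have hr : ∀ p : ℝ, ContinuousAt (fun z => rr z y ^ p) 0 := fun p => by
    have : ContinuousAt (fun z => rr z y) 0 := by unfold rr; fun_prop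
    exact this.rpow_const (Or.inl hpos.ne')
  have hc : ContinuousAt (fun z => qk n s z y) 0 := by
    have h2 : ContinuousAt (fun z : ℝ => 2 * ee n s * z ^ 2) 0 := by fun_prop
    exact continuousAt_const.mul ((continuousAt_const.mul (hr _)).add (h2.mul (hr _)))
  have h := hc.tendsto
  have e : qk n s 0 y = 2 * s * pns n s * sk n s y := by
    rw [sk_eq]; unfold qk rr; simp; ring
  rw [e] at h
  exact h.mono_left nhdsWithin_le_nhds

theorem Tq_tendsto (hn : 1 ≤ n) {s : ℝ} (hs0 : 0 < s) (hs1 : s < 1) {M : ℝ}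
    {F : ℝ → En n → ℝ} {f : En n → ℝ} (hF : ∀ z, 0 < z → CB 2 M (F z)) (hf : CB 2 M f)
    (hlim : ∀ y, Tendsto (fun z => F z y) (𝓝[>] 0) (𝓝 (f y))) (x : En n) :
    Tendsto (fun z => TT (qk n s z) (F z) x) (𝓝[>] 0) (𝓝 ((betaS s)⁻¹ * Lam n s f x)) := by
  have hb := betaS_pos hs0 hs1
  have hp := pns_pos (n := n) hs0
  have hsd : ∀ y, Tendsto (fun z => sd (F z) x y) (𝓝[>] 0) (𝓝 (sd f x y)) := fun y => by
    unfold sd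
    exact ((hlim _).add (hlim _)).sub ((hlim _).const_mul 2)
  have hT : Tendsto (fun z => ∫ y, qk n s z y * sd (F z) x y) (𝓝[>] 0)
      (𝓝 (∫ y, (2 * s * pns n s) * (sd f x y * sk n s y))) := by
    refine tendsto_integral_filter_of_dominated_convergence
      (fun y => (((n + 4 * s) * pns n s) * (c0 n * M)) * LW n s y) ?_ ?_ ?_ ?_
    · filter_upwards [self_mem_nhdsWithin] with z hz
      exact ((qk_cont hz).mul (sd_cont (hF z hz).cont x)).aestronglyMeasurable
    · filter_upwards [self_mem_nhdsWithin] with z hz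
      exact Eventually.of_forall fun y =>
        ker_sd_bound (by positivity) (qk_le_sk hs0 hz) (hF z hz) x y
    · exact (LW_integrable hn hs0 hs1).const_mul _
    · refine Eventually.of_forall fun y => ?_
      by_cases hy : y = 0
      · subst hy
        simp only [sd_zero, mul_zero, zero_mul]
        exact tendsto_const_nhds
      · have := (qk_tendsto (s := s) y hy).mul (hsd y)
        convert this using 2
        ring
  have h2 := hT.const_mul (1 / 2)
  have e : (betaS s)⁻¹ * Lam n s f x = 1 / 2 * ∫ y, (2 * s * pns n s) * (sd f x y * sk n s y) := by
    rw [Lam_eq hn hs0 hs1 hf, integral_const_mul, ← beta_Cns hs0 hs1]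
    field_simp
  rw [e]
  refine h2.congr' ?_
  filter_upwards [self_mem_nhdsWithin] with z hz
  have h := TT_even2 (qk_integrable (n := n) hs0 hz) (qk_even s z) (hF z hz) x
  rw [qk_integral hs0 hz, zero_mul, sub_zero] at h
  exact h.symm

/-! ### Decay -/

theorem qk_abs_integral {s z : ℝ} (hs0 : 0 < s) (hz : 0 < z) :
    ∫ y, |qk n s z y| ≤ (n + 4 * s) * z ^ (-(2 * s)) := by
  have e : ∀ y, |qk n s z y| = z ^ (1 - 2 * s) * |Qk n s z y| := fun y => by
    unfold Qk
    rw [abs_mul, abs_of_pos (Real.rpow_pos_of_pos hz _), ← mul_assoc, ← Real.rpow_add hz]; simp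
  simp only [e]
  rw [integral_const_mul]
  refine (mul_le_mul_of_nonneg_left (Qk_abs_integral hs0 hz)
    (Real.rpow_pos_of_pos hz _).le).trans (le_of_eq ?_)
  rw [show -(2 * s) = 1 - 2 * s - 1 by ring, Real.rpow_sub_one hz.ne']
  ring

theorem Tq_decay {s z M : ℝ} (hs0 : 0 < s) (hz : 0 < z) {k : ℕ} {w : En n → ℝ} (hw : CB k M w) :
    CB k ((n + 4 * s) * z ^ (-(2 * s)) * M) (TT (qk n s z) w) :=
  (TT_CB (qk_integrable hs0 hz) hw).mono
    (mul_le_mul_of_nonneg_right (qk_abs_integral hs0 hz) hw.nonneg)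

theorem TQ_decay {s z M : ℝ} (hs0 : 0 < s) (hz : 0 < z) {k : ℕ} {w : En n → ℝ} (hw : CB k M w) :
    CB k ((n + 4 * s) / z * M) (TT (Qk n s z) w) :=
  (TT_CB (Qk_integrable hs0 hz) hw).mono
    (mul_le_mul_of_nonneg_right (Qk_abs_integral hs0 hz) hw.nonneg)

theorem TPd_decay {s z M : ℝ} (hs0 : 0 < s) (hz : 0 < z) {k : ℕ} {w : En n → ℝ}
    (hw : CB (k + 1) M w) (i : Fin n) :
    CB k ((n + 4 * s) / z * M) (TT (Pker n s z) (pd i w)) := by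
  have e : TT (Pker n s z) (pd i w) = TT (pd i (Pker n s z)) w := by
    funext x
    rw [TT_ibp (Pker_diff hz) (Pker_integrable hs0 hz) (pd_Pker_integrable hs0 hz i)
      (hw.le (by omega))]
  rw [e]
  exact (TT_CB (pd_Pker_integrable hs0 hz i) hw.down).mono
    (mul_le_mul_of_nonneg_right (pd_Pker_abs_integral hs0 hz i) hw.nonneg)

/-- The size of the first derivatives of the extension. -/
def rho (s z : ℝ) : ℝ := if z ≤ 1 then 1 + z ^ (2 * s - 1) else z⁻¹

theorem rho_nonneg {s z : ℝ} (hz : 0 < z) : 0 ≤ rho s z := by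
  unfold rho; split_ifs <;> positivity

/-- Constant in the estimates of first derivatives. -/
def cE (n : ℕ) (s : ℝ) : ℝ := 1 + (n + 4 * s) + cq n s

theorem cE_nonneg {s : ℝ} (hs0 : 0 < s) : 0 ≤ cE n s := by
  unfold cE
  have := cq_nonneg (n := n) hs0
  positivity

theorem dx_CB {s z M : ℝ} (hs0 : 0 < s) (hz : 0 < z) {k : ℕ} {w : En n → ℝ}
    (hw : CB (k + 1) M w) (i : Fin n) :
    CB k (cE n s * M * rho s z) (TT (Pker n s z) (pd i w)) := by
  have hM := hw.nonneg
  have hc := cq_nonneg (n := n) hs0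
  unfold rho
  split_ifs with h
  · refine (TP_CB hs0 hz (hw.2.2 i)).mono ?_
    have h1 : M ≤ cE n s * M := by
      have : 1 ≤ cE n s := by unfold cE; linarith [show 0 ≤ (n : ℝ) + 4 * s by positivity]
      nlinarith
    have h2 := (Real.rpow_pos_of_pos hz (2 * s - 1)).le
    nlinarith [mul_nonneg (hM.trans h1) h2]
  · refine (TPd_decay hs0 hz hw i).mono ?_
    have : (n : ℝ) + 4 * s ≤ cE n s := by unfold cE; linarith
    rw [div_eq_mul_inv, mul_right_comm]
    gcongr

theorem dz_CB (hn : 1 ≤ n) {s : ℝ} (hs0 : 0 < s) (hs1 : s < 1) {z M : ℝ} (hz : 0 < z) {k : ℕ}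
    {w : En n → ℝ} (hw : CB (k + 2) M w) :
    CB k (cE n s * M * rho s z) (TT (Qk n s z) w) := by
  have hM := hw.nonneg
  have hc := cq_nonneg (n := n) hs0
  have hn0 : 0 ≤ (n : ℝ) + 4 * s := by positivity
  unfold rho
  split_ifs with h
  · have e : TT (Qk n s z) w = fun x => z ^ (2 * s - 1) * TT (qk n s z) w x := funext (TQ_eq s z w)
    rw [e]
    refine ((Tq_CB hn hs0 hs1 hz hw).const_mul _).mono ?_
    have h2 := (Real.rpow_pos_of_pos hz (2 * s - 1)).le
    rw [abs_of_nonneg h2]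
    have : cq n s ≤ cE n s := by unfold cE; linarith
    calc z ^ (2 * s - 1) * (cq n s * M) ≤ (1 + z ^ (2 * s - 1)) * (cE n s * M) := by
          gcongr; linarith
      _ = _ := by ring
  · refine (TQ_decay hs0 hz (hw.le (by omega))).mono ?_
    have : (n : ℝ) + 4 * s ≤ cE n s := by unfold cE; linarith
    rw [div_eq_mul_inv, mul_right_comm]
    gcongr

theorem rho_integrable {s : ℝ} (hs0 : 0 < s) (hs1 : s < 1) :
    IntegrableOn (fun z => z ^ (1 - 2 * s) * rho s z ^ 2) (Ioi 0) := by
  rw [← Ioc_union_Ioi_eq_Ioi (zero_le_one (α := ℝ))]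
  refine IntegrableOn.union ?_ ?_
  · have h1 : IntegrableOn (fun z : ℝ => z ^ (1 - 2 * s)) (Ioc 0 1) :=
      (intervalIntegrable_iff_integrableOn_Ioc_of_le zero_le_one).1
        (intervalIntegral.intervalIntegrable_rpow' (by linarith))
    have h2 : IntegrableOn (fun z : ℝ => z ^ (2 * s - 1)) (Ioc 0 1) :=
      (intervalIntegrable_iff_integrableOn_Ioc_of_le zero_le_one).1
        (intervalIntegral.intervalIntegrable_rpow' (by linarith))
    have h3 : IntegrableOn (fun z : ℝ => z ^ (1 - 2 * s) + 2 + z ^ (2 * s - 1)) (Ioc 0 1) :=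
      (h1.add (integrable_const _)).add h2
    refine h3.congr_fun (fun z hz => ?_) measurableSet_Ioc
    have e : z ^ (1 - 2 * s) * z ^ (2 * s - 1) = 1 := by
      rw [← Real.rpow_add hz.1]; simp
    simp only [rho, if_pos hz.2]
    linear_combination (-2 - z ^ (2 * s - 1)) * e
  · have h1 : IntegrableOn (fun z : ℝ => z ^ (-1 - 2 * s)) (Ioi 1) :=
      integrableOn_Ioi_rpow_of_lt (by linarith) one_pos
    refine h1.congr_fun (fun z hz => ?_) measurableSet_Ioi
    have hz0 : 0 < z := lt_trans one_pos hz
    simp only [rho, if_neg (not_le.2 (mem_Ioi.1 hz))]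
    rw [show -1 - 2 * s = (1 - 2 * s) - 2 by ring, Real.rpow_sub hz0]
    norm_num
    field_simp
end

open MeasureTheory Filter Set
open scoped Topology ENNReal NNReal

section

variable {n : ℕ}

/-! ### The representation of `Γ₁` -/

theorem TT_sum {k : En n → ℝ} {f : Fin n → En n → ℝ} {j : ℕ} {M : ℝ} (hk : Integrable k)
    (hf : ∀ i, CB j M (f i)) (x : En n) :
    TT k (fun y => ∑ i, f i y) x = ∑ i, TT k (f i) x := by
  unfold TT
  rw [← integral_finsetSum _ (fun i _ => TT_integrable hk (hf i) x)]
  simp only [Finset.mul_sum]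

theorem Tdq_sum {s z M : ℝ} (hs0 : 0 < s) (hz : 0 < z) {w : En n → ℝ} (hw : CB 2 M w) (x : En n) :
    TT (dqk n s z) w x = -(z ^ (1 - 2 * s) * ∑ i, TT (Pker n s z) (pd i (pd i w)) x) := by
  have e : ∀ i, TT (Pker n s z) (pd i (pd i w)) x = TT (pd i (pd i (Pker n s z))) w x := fun i => by
    rw [TT_ibp (pd_Pker_diff hz i) (pd_Pker_integrable hs0 hz i) (pd_pd_Pker_integrable hs0 hz i)
      hw.down, TT_ibp (Pker_diff hz) (Pker_integrable hs0 hz) (pd_Pker_integrable hs0 hz i)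
      (hw.2.2 i)]
  simp only [e]
  unfold TT
  rw [← integral_finsetSum _ (fun i _ => TT_integrable (pd_pd_Pker_integrable hs0 hz i) hw x),
    ← integral_const_mul, ← integral_neg]
  refine integral_congr_ae (Eventually.of_forall fun y => ?_)
  simp only [dqk_eq hz]
  rw [← Finset.sum_mul]; ring

theorem lapX_CB {M : ℝ} {k : ℕ} {w : En n → ℝ} (hw : CB (k + 2) M w) : CB k (n * M) (lapX w) := by
  have := CB.sum (Finset.univ : Finset (Fin n)) (f := fun i => pd i (pd i w))
    (fun i => (hw.2.2 i).2.2 i)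
  simp only [Finset.card_univ, Fintype.card_fin] at this
  exact this

theorem Tdq_lap {s z M : ℝ} (hs0 : 0 < s) (hz : 0 < z) {w : En n → ℝ} (hw : CB 2 M w) (x : En n) :
    TT (dqk n s z) w x = -(z ^ (1 - 2 * s) * TT (Pker n s z) (lapX w) x) := by
  rw [Tdq_sum hs0 hz hw, ← TT_sum (Pker_integrable hs0 hz) (fun i => (hw.2.2 i).2.2 i)]
  rfl

theorem ker_dom {s z0 : ℝ} (hs0 : 0 < s) (hz0 : 0 < z0) : ∃ G : En n → ℝ, Integrable G ∧
    ∀ z ∈ Ioo (z0 / 2) (2 * z0), ∀ y, |Pker n s z y| ≤ G y ∧ |Qk n s z y| ≤ G y ∧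
      |qk n s z y| ≤ G y ∧ |dqk n s z y| ≤ G y := by
  have hp := pns_pos (n := n) hs0
  have hz2 : 0 < z0 / 2 := by linarith
  set a := (2 * z0) ^ (2 * s) with ha
  have ha0 : 0 < a := Real.rpow_pos_of_pos (by linarith) _
  set c := (n : ℝ) + 4 * s with hc
  have hc0 : 0 < c := by rw [hc]; positivity
  have hc3 : 0 ≤ c3 n s := by unfold c3; positivity
  set C := pns n s * (a + c / (z0 / 2) * a + c + c3 n s / (z0 / 2)) with hC
  have t1 : 0 ≤ c / (z0 / 2) * a := by positivity
  have t2 : 0 ≤ c3 n s / (z0 / 2) := by positivity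
  refine ⟨fun y => C * Gk n s (z0 / 2) y, (Gk_integrable hs0 hz2).const_mul _, fun z hz y => ?_⟩
  have hzp : 0 < z := hz2.trans hz.1
  have hG := Gk_pos (n := n) (s := s) hz2 y
  have hGz := Gk_pos (n := n) (s := s) hzp y
  have hGl := Gk_anti (n := n) hs0 hz2 hz.1.le y
  have hza : z ^ (2 * s) ≤ a := Real.rpow_le_rpow hzp.le hz.2.le (by positivity)
  have hP : Pker n s z y ≤ (pns n s * a) * Gk n s (z0 / 2) y := by
    rw [Pker_eq]; gcongr
  have hkey : ∀ b, b ≤ a + c / (z0 / 2) * a + c + c3 n s / (z0 / 2) →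
      (pns n s * b) * Gk n s (z0 / 2) y ≤ C * Gk n s (z0 / 2) y := fun b hb => by
    rw [hC]; gcongr
  refine ⟨?_, ?_, ?_, ?_⟩
  · rw [abs_of_pos (Pker_pos hs0 hzp y)]
    exact hP.trans (hkey a (by linarith))
  · refine (Qk_bound hs0 hzp y).trans (le_trans ?_ (hkey (c / (z0 / 2) * a) (by linarith)))
    calc c / z * Pker n s z y ≤ c / (z0 / 2) * ((pns n s * a) * Gk n s (z0 / 2) y) := by
          have := (Pker_pos (n := n) hs0 hzp y).le
          have := hz.1.le
          gcongr
      _ = _ := by ring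
  · refine (qk_bound hs0 hzp y).trans (le_trans ?_ (hkey c (by linarith)))
    calc c * (pns n s * Gk n s z y) ≤ c * (pns n s * Gk n s (z0 / 2) y) := by gcongr
      _ = _ := by ring
  · refine (dqk_bound hs0 hzp y).trans (le_trans ?_ (hkey (c3 n s / (z0 / 2)) (by linarith)))
    calc c3 n s * (z⁻¹ * (pns n s * Gk n s z y))
        ≤ c3 n s * ((z0 / 2)⁻¹ * (pns n s * Gk n s (z0 / 2) y)) := by
          have := hz.1.le
          gcongr
      _ = _ := by ring

theorem nbhd_mem {z0 : ℝ} (hz0 : 0 < z0) : Ioo (z0 / 2) (2 * z0) ∈ 𝓝 z0 :=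
  Ioo_mem_nhds (by linarith) (by linarith)

theorem TT_zero (k : En n → ℝ) (x : En n) : TT k (fun _ => 0) x = 0 := by unfold TT; simp

theorem TP_hasDerivAt {s z0 M : ℝ} (hs0 : 0 < s) (hz0 : 0 < z0) {w : En n → ℝ} {k : ℕ}
    (hw : CB k M w) (x : En n) :
    HasDerivAt (fun z => TT (Pker n s z) w x) (TT (Qk n s z0) w x) z0 := by
  obtain ⟨G, hG, hb⟩ := ker_dom (n := n) hs0 hz0
  have hp : ∀ z ∈ Ioo (z0 / 2) (2 * z0), 0 < z := fun z hz => by linarith [hz.1]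
  have := TT_hasDerivAt (nbhd_mem hz0) (k := Pker n s) (k' := Qk n s) (a := fun _ => w)
    (a' := fun _ _ => 0) (M := M) hG x (fun z hz y => Pker_hasDerivAt (hp z hz) y)
    (fun z _ y => hasDerivAt_const _ _) (fun z hz y => (hb z hz y).1)
    (fun z hz y => (hb z hz y).2.1) (fun z _ y => hw.bound y)
    (fun z _ y => by simpa using hw.nonneg) (fun z hz => Pker_cont (hp z hz)) (Qk_cont hz0)
    (fun _ _ => hw.cont) continuous_const
  rwa [TT_zero, add_zero] at this

theorem Tq_hasDerivAt {s z0 M : ℝ} (hs0 : 0 < s) (hz0 : 0 < z0) {w : En n → ℝ} {k : ℕ}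
    (hw : CB k M w) (x : En n) :
    HasDerivAt (fun z => TT (qk n s z) w x) (TT (dqk n s z0) w x) z0 := by
  obtain ⟨G, hG, hb⟩ := ker_dom (n := n) hs0 hz0
  have hp : ∀ z ∈ Ioo (z0 / 2) (2 * z0), 0 < z := fun z hz => by linarith [hz.1]
  have := TT_hasDerivAt (nbhd_mem hz0) (k := qk n s) (k' := dqk n s) (a := fun _ => w)
    (a' := fun _ _ => 0) (M := M) hG x (fun z hz y => qk_hasDerivAt (hp z hz) y)
    (fun z _ y => hasDerivAt_const _ _) (fun z hz y => (hb z hz y).2.2.1)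
    (fun z hz y => (hb z hz y).2.2.2) (fun z _ y => hw.bound y)
    (fun z _ y => by simpa using hw.nonneg) (fun z hz => qk_cont (hp z hz)) (dqk_cont hz0)
    (fun _ _ => hw.cont) continuous_const
  rwa [TT_zero, add_zero] at this

/-- `∇U·∇V + ∂_z U ∂_z V`. -/
def SS (n : ℕ) (s : ℝ) (u v : En n → ℝ) (z : ℝ) (y : En n) : ℝ :=
  (∑ i, TT (Pker n s z) (pd i u) y * TT (Pker n s z) (pd i v) y)
    + TT (Qk n s z) u y * TT (Qk n s z) v y

/-- `UV`. -/
def FF (n : ℕ) (s : ℝ) (u v : En n → ℝ) (z : ℝ) (y : En n) : ℝ :=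
  TT (Pker n s z) u y * TT (Pker n s z) v y

/-- `∂_z (UV)`. -/
def FF' (n : ℕ) (s : ℝ) (u v : En n → ℝ) (z : ℝ) (y : En n) : ℝ :=
  TT (Qk n s z) u y * TT (Pker n s z) v y + TT (Pker n s z) u y * TT (Qk n s z) v y

/-- `z^{1-2s}∂_z (UV)`. -/
def AA (n : ℕ) (s : ℝ) (u v : En n → ℝ) (z : ℝ) (y : En n) : ℝ :=
  TT (qk n s z) u y * TT (Pker n s z) v y + TT (Pker n s z) u y * TT (qk n s z) v y

/-- `∂_z(z^{1-2s}∂_z (UV))`. -/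
def AA' (n : ℕ) (s : ℝ) (u v : En n → ℝ) (z : ℝ) (y : En n) : ℝ :=
  (TT (dqk n s z) u y * TT (Pker n s z) v y + TT (qk n s z) u y * TT (Qk n s z) v y)
    + (TT (Qk n s z) u y * TT (qk n s z) v y + TT (Pker n s z) u y * TT (dqk n s z) v y)

theorem lap_FF {s z M : ℝ} (hs0 : 0 < s) (hz : 0 < z) {u v : En n → ℝ} (hu : CB 2 M u)
    (hv : CB 2 M v) (y : En n) : lapX (FF n s u v z) y = ∑ i,
      (TT (Pker n s z) u y * TT (Pker n s z) (pd i (pd i v)) y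
        + TT (Pker n s z) (pd i (pd i u)) y * TT (Pker n s z) v y
        + 2 * (TT (Pker n s z) (pd i u) y * TT (Pker n s z) (pd i v) y)) := by
  unfold lapX
  refine Finset.sum_congr rfl fun i _ => ?_
  have hP := Pker_integrable (n := n) hs0 hz
  have cu := TP_CB hs0 hz hu
  have cv := TP_CB hs0 hz hv
  have cpu := TP_CB hs0 hz (hu.2.2 i)
  have cpv := TP_CB hs0 hz (hv.2.2 i)
  have e1 : pd i (FF n s u v z) = fun y => TT (Pker n s z) u y * TT (Pker n s z) (pd i v) y
      + TT (Pker n s z) v y * TT (Pker n s z) (pd i u) y := by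
    have : FF n s u v z = fun y => TT (Pker n s z) u y * TT (Pker n s z) v y := rfl
    rw [this, pd_mul cu.1 cv.1, pd_TT (j := 1) hP hu, pd_TT (j := 1) hP hv]
  rw [e1, pd_add (f := fun y => TT (Pker n s z) u y * TT (Pker n s z) (pd i v) y)
      (g := fun y => TT (Pker n s z) v y * TT (Pker n s z) (pd i u) y)
      (cu.1.mul cpv.1) (cv.1.mul cpu.1), pd_mul cu.1 cpv.1, pd_mul cv.1 cpu.1,
    pd_TT (j := 1) hP hu, pd_TT (j := 1) hP hv, pd_TT (j := 0) hP (hu.2.2 i),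
    pd_TT (j := 0) hP (hv.2.2 i)]
  ring

theorem AA_lap {s z M : ℝ} (hs0 : 0 < s) (hz : 0 < z) {u v : En n → ℝ} (hu : CB 2 M u)
    (hv : CB 2 M v) (y : En n) :
    AA' n s u v z y + z ^ (1 - 2 * s) * lapX (FF n s u v z) y =
      (2 * z ^ (1 - 2 * s)) * SS n s u v z y := by
  rw [lap_FF hs0 hz hu hv]
  unfold AA' SS
  rw [Tdq_sum hs0 hz hu, Tdq_sum hs0 hz hv, Tq_eq hz, Tq_eq hz]
  rw [Finset.sum_add_distrib, Finset.sum_add_distrib, ← Finset.mul_sum, ← Finset.mul_sum,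
    ← Finset.sum_mul]
  ring

theorem FF_hasDerivAt {s z M : ℝ} (hs0 : 0 < s) (hz : 0 < z) {u v : En n → ℝ} {k : ℕ}
    (hu : CB k M u) (hv : CB k M v) (y : En n) :
    HasDerivAt (fun z => FF n s u v z y) (FF' n s u v z y) z :=
  (TP_hasDerivAt hs0 hz hu y).mul (TP_hasDerivAt hs0 hz hv y)

theorem AA_hasDerivAt {s z M : ℝ} (hs0 : 0 < s) (hz : 0 < z) {u v : En n → ℝ} {k : ℕ}
    (hu : CB k M u) (hv : CB k M v) (y : En n) :
    HasDerivAt (fun z => AA n s u v z y) (AA' n s u v z y) z :=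
  ((Tq_hasDerivAt hs0 hz hu y).mul (TP_hasDerivAt hs0 hz hv y)).add
    ((TP_hasDerivAt hs0 hz hu y).mul (Tq_hasDerivAt hs0 hz hv y))

theorem FF_CB {s z M : ℝ} (hs0 : 0 < s) (hz : 0 < z) {u v : En n → ℝ} {k : ℕ}
    (hu : CB k M u) (hv : CB k M v) : CB k (2 ^ k * (M * M)) (FF n s u v z) :=
  (TP_CB hs0 hz hu).mul (TP_CB hs0 hz hv)

theorem AA_CB (hn : 1 ≤ n) {s z M : ℝ} (hs0 : 0 < s) (hs1 : s < 1) (hz : 0 < z) {u v : En n → ℝ}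
    {k : ℕ} (hu : CB (k + 2) M u) (hv : CB (k + 2) M v) :
    CB k (2 ^ k * (cq n s * M * M) + 2 ^ k * (M * (cq n s * M))) (AA n s u v z) :=
  ((Tq_CB hn hs0 hs1 hz hu).mul (TP_CB hs0 hz (hv.le (by omega)))).add
    ((TP_CB hs0 hz (hu.le (by omega))).mul (Tq_CB hn hs0 hs1 hz hv))

theorem SS_CB (hn : 1 ≤ n) {s z M : ℝ} (hs0 : 0 < s) (hs1 : s < 1) (hz : 0 < z) {u v : En n → ℝ}
    {k : ℕ} (hu : CB (k + 2) M u) (hv : CB (k + 2) M v) :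
    CB k ((n + 1) * (2 ^ k * (cE n s * M) ^ 2) * rho s z ^ 2) (SS n s u v z) := by
  have h1 := CB.sum (Finset.univ : Finset (Fin n))
    (f := fun i y => TT (Pker n s z) (pd i u) y * TT (Pker n s z) (pd i v) y)
    (fun i => (dx_CB (k := k) hs0 hz (hu.le (by omega)) i).mul
      (dx_CB (k := k) hs0 hz (hv.le (by omega)) i))
  have h2 := (dz_CB hn hs0 hs1 hz hu).mul (dz_CB hn hs0 hs1 hz hv)
  refine (h1.add h2).mono (le_of_eq ?_)
  simp only [Finset.card_univ, Fintype.card_fin]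
  ring

theorem TT_dqk_bound {s z M C : ℝ} (hs0 : 0 < s) (hz : 0 < z) (hC : |z ^ (1 - 2 * s)| ≤ C)
    {w : En n → ℝ} (hw : CB 2 M w) (y : En n) : |TT (dqk n s z) w y| ≤ C * (n * M) := by
  rw [Tdq_lap hs0 hz hw, abs_neg, abs_mul]
  exact mul_le_mul hC ((TP_CB hs0 hz (lapX_CB (k := 0) hw)).bound y) (abs_nonneg _)
    ((abs_nonneg _).trans hC)

/-- The auxiliary function. -/
def HH (n : ℕ) (s : ℝ) (u v : En n → ℝ) (x : En n) (z : ℝ) : ℝ :=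
  TT (Pker n s z) (AA n s u v z) x - TT (qk n s z) (FF n s u v z) x

theorem mul_bd {a b A B : ℝ} (ha : |a| ≤ A) (hb : |b| ≤ B) : |a * b| ≤ A * B := by
  rw [abs_mul]; exact mul_le_mul ha hb (abs_nonneg _) ((abs_nonneg _).trans ha)

theorem HH_hasDerivAt (hn : 1 ≤ n) {s z0 M : ℝ} (hs0 : 0 < s) (hs1 : s < 1) (hz0 : 0 < z0)
    {u v : En n → ℝ} (hu : CB 4 M u) (hv : CB 4 M v) (x : En n) :
    HasDerivAt (HH n s u v x) (2 * (z0 ^ (1 - 2 * s) * TT (Pker n s z0) (SS n s u v z0) x)) z0 := by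
  obtain ⟨G, hG, hb⟩ := ker_dom (n := n) hs0 hz0
  have hp : ∀ z ∈ Ioo (z0 / 2) (2 * z0), 0 < z := fun z hz => by linarith [hz.1]
  have hM := hu.nonneg
  have hc := cq_nonneg (n := n) hs0
  obtain ⟨C, hC⟩ : ∃ C, ∀ z ∈ Ioo (z0 / 2) (2 * z0), |z ^ (1 - 2 * s)| ≤ C := by
    have hcont : ContinuousOn (fun z : ℝ => z ^ (1 - 2 * s)) (Icc (z0 / 2) (2 * z0)) := by
      intro z hz
      exact (Real.continuousAt_rpow_const _ _
        (Or.inl (by linarith [hz.1] : (0 : ℝ) < z).ne')).continuousWithinAt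
    obtain ⟨C, hC⟩ := isCompact_Icc.exists_bound_of_continuousOn hcont
    exact ⟨C, fun z hz => hC z (Ioo_subset_Icc_self hz)⟩
  have hu2 : CB 2 M u := hu.le (by omega)
  have hv2 : CB 2 M v := hv.le (by omega)
  -- bounds
  have bP : ∀ {w : En n → ℝ}, CB 2 M w → ∀ z ∈ Ioo (z0 / 2) (2 * z0), ∀ y,
      |TT (Pker n s z) w y| ≤ M := fun hw z hz y => (TP_CB hs0 (hp z hz) hw).bound y
  have bq : ∀ {w : En n → ℝ}, CB 2 M w → ∀ z ∈ Ioo (z0 / 2) (2 * z0), ∀ y,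
      |TT (qk n s z) w y| ≤ cq n s * M := fun hw z hz y => Tq_bound hn hs0 hs1 (hp z hz) hw y
  have bQ : ∀ {w : En n → ℝ}, CB 2 M w → ∀ z ∈ Ioo (z0 / 2) (2 * z0), ∀ y,
      |TT (Qk n s z) w y| ≤ (n + 4 * s) / (z0 / 2) * M := fun hw z hz y => by
    refine ((TQ_decay hs0 (hp z hz) hw).bound y).trans ?_
    have := hz.1.le
    gcongr
  have bd : ∀ {w : En n → ℝ}, CB 2 M w → ∀ z ∈ Ioo (z0 / 2) (2 * z0), ∀ y,
      |TT (dqk n s z) w y| ≤ C * (n * M) := fun hw z hz y =>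
    TT_dqk_bound hs0 (hp z hz) (hC z hz) hw y
  set Q := (n + 4 * s) / (z0 / 2) * M with hQ
  set q := cq n s * M with hq
  set D := C * (n * M) with hD
  have cP : ∀ {w : En n → ℝ}, CB 2 M w → ∀ z, 0 < z → Continuous (TT (Pker n s z) w) :=
    fun hw z hz => (TT_CB (Pker_integrable hs0 hz) hw).cont
  have cq' : ∀ {w : En n → ℝ}, CB 2 M w → ∀ z, 0 < z → Continuous (TT (qk n s z) w) :=
    fun hw z hz => (TT_CB (qk_integrable hs0 hz) hw).cont
  have cQ : ∀ {w : En n → ℝ}, CB 2 M w → ∀ z, 0 < z → Continuous (TT (Qk n s z) w) :=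
    fun hw z hz => (TT_CB (Qk_integrable hs0 hz) hw).cont
  have cd : ∀ {w : En n → ℝ}, CB 2 M w → ∀ z, 0 < z → Continuous (TT (dqk n s z) w) :=
    fun hw z hz => (TT_CB (dqk_integrable hs0 hz) hw).cont
  have bAA' : ∀ z ∈ Ioo (z0 / 2) (2 * z0), ∀ y, |AA' n s u v z y| ≤
      (D * M + q * Q) + (Q * q + M * D) := fun z hz y =>
    (abs_add_le _ _).trans (add_le_add
      ((abs_add_le _ _).trans (add_le_add (mul_bd (bd hu2 z hz y) (bP hv2 z hz y))
        (mul_bd (bq hu2 z hz y) (bQ hv2 z hz y))))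
      ((abs_add_le _ _).trans (add_le_add (mul_bd (bQ hu2 z hz y) (bq hv2 z hz y))
        (mul_bd (bP hu2 z hz y) (bd hv2 z hz y)))))
  have cAA' : Continuous (AA' n s u v z0) :=
    (((cd hu2 _ hz0).mul (cP hv2 _ hz0)).add ((cq' hu2 _ hz0).mul (cQ hv2 _ hz0))).add
      (((cQ hu2 _ hz0).mul (cq' hv2 _ hz0)).add ((cP hu2 _ hz0).mul (cd hv2 _ hz0)))
  have bAA : ∀ z ∈ Ioo (z0 / 2) (2 * z0), ∀ y, |AA n s u v z y| ≤ q * M + M * q := fun z hz y =>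
    (abs_add_le _ _).trans (add_le_add (mul_bd (bq hu2 z hz y) (bP hv2 z hz y))
        (mul_bd (bP hu2 z hz y) (bq hv2 z hz y)))
  have bFF' : ∀ z ∈ Ioo (z0 / 2) (2 * z0), ∀ y, |FF' n s u v z y| ≤ Q * M + M * Q := fun z hz y =>
    (abs_add_le _ _).trans (add_le_add (mul_bd (bQ hu2 z hz y) (bP hv2 z hz y))
        (mul_bd (bP hu2 z hz y) (bQ hv2 z hz y)))
  have bFF : ∀ z ∈ Ioo (z0 / 2) (2 * z0), ∀ y, |FF n s u v z y| ≤ M * M := fun z hz y =>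
    mul_bd (bP hu2 z hz y) (bP hv2 z hz y)
  have cFF' : Continuous (FF' n s u v z0) :=
    ((cQ hu2 _ hz0).mul (cP hv2 _ hz0)).add ((cP hu2 _ hz0).mul (cQ hv2 _ hz0))
  have D1 := TT_hasDerivAt (nbhd_mem hz0) (k := Pker n s) (k' := Qk n s) (a := AA n s u v)
    (a' := AA' n s u v) (M := max (q * M + M * q) ((D * M + q * Q) + (Q * q + M * D))) hG x
    (fun z hz y => Pker_hasDerivAt (hp z hz) y) (fun z hz y => AA_hasDerivAt hs0 (hp z hz) hu hv y)
    (fun z hz y => (hb z hz y).1) (fun z hz y => (hb z hz y).2.1)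
    (fun z hz y => (bAA z hz y).trans (le_max_left _ _))
    (fun z hz y => (bAA' z hz y).trans (le_max_right _ _))
    (fun z hz => Pker_cont (hp z hz)) (Qk_cont hz0)
    (fun z hz => ((cq' hu2 _ (hp z hz)).mul (cP hv2 _ (hp z hz))).add
      ((cP hu2 _ (hp z hz)).mul (cq' hv2 _ (hp z hz)))) cAA'
  have D2 := TT_hasDerivAt (nbhd_mem hz0) (k := qk n s) (k' := dqk n s) (a := FF n s u v)
    (a' := FF' n s u v) (M := max (M * M) (Q * M + M * Q)) hG x
    (fun z hz y => qk_hasDerivAt (hp z hz) y) (fun z hz y => FF_hasDerivAt hs0 (hp z hz) hu hv y)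
    (fun z hz y => (hb z hz y).2.2.1) (fun z hz y => (hb z hz y).2.2.2)
    (fun z hz y => (bFF z hz y).trans (le_max_left _ _))
    (fun z hz y => (bFF' z hz y).trans (le_max_right _ _))
    (fun z hz => qk_cont (hp z hz)) (dqk_cont hz0)
    (fun z hz => (cP hu2 _ (hp z hz)).mul (cP hv2 _ (hp z hz))) cFF'
  refine (D1.sub D2).congr_deriv ?_
  have hz0' := mem_of_mem_nhds (nbhd_mem hz0)
  have cbA' : CB 0 ((D * M + q * Q) + (Q * q + M * D)) (AA' n s u v z0) := ⟨cAA', bAA' z0 hz0'⟩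
  have cbL : CB 0 (|z0 ^ (1 - 2 * s)| * (n * (2 ^ 2 * (M * M))))
      (fun y => z0 ^ (1 - 2 * s) * lapX (FF n s u v z0) y) :=
    (lapX_CB (k := 0) (FF_CB hs0 hz0 hu2 hv2)).const_mul _
  have hP := Pker_integrable (n := n) hs0 hz0
  have e1 : TT (Qk n s z0) (AA n s u v z0) x = TT (qk n s z0) (FF' n s u v z0) x := by
    have eA : AA n s u v z0 = fun y => z0 ^ (1 - 2 * s) * FF' n s u v z0 y := by
      funext y; unfold AA FF'
      rw [Tq_eq hz0, Tq_eq hz0]; ring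
    rw [Tq_eq hz0, eA, TT_const_mul]
  have e2 := TT_add hP cbA' cbL x
  rw [TT_const_mul] at e2
  have e3 : TT (Pker n s z0) (fun y => AA' n s u v z0 y +
      z0 ^ (1 - 2 * s) * lapX (FF n s u v z0) y) x =
      (2 * z0 ^ (1 - 2 * s)) * TT (Pker n s z0) (SS n s u v z0) x := by
    rw [← TT_const_mul]
    congr 1
    funext y
    exact AA_lap hs0 hz0 hu2 hv2 y
  rw [e1, Tdq_lap hs0 hz0 (FF_CB hs0 hz0 hu2 hv2)]
  linear_combination e3 - e2

theorem HH_zero (hn : 1 ≤ n) {s M : ℝ} (hs0 : 0 < s) (hs1 : s < 1)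
    {u v : En n → ℝ} (hu : CB 4 M u) (hv : CB 4 M v) (x : En n) :
    Tendsto (HH n s u v x) (𝓝[>] 0) (𝓝 (-(2 * (betaS s)⁻¹ * Gamma1 n s u v x))) := by
  have hu2 : CB 2 M u := hu.le (by omega)
  have hv2 : CB 2 M v := hv.le (by omega)
  have h1 := TP_tendsto hn hs0 hs1 (fun z hz => AA_CB (k := 2) hn hs0 hs1 hz hu hv) x
  have lu := fun y => TP_tendsto' hn hs0 hs1 hu2 y
  have lv := fun y => TP_tendsto' hn hs0 hs1 hv2 y
  have qu := Tq_tendsto hn hs0 hs1 (F := fun _ => u) (fun _ _ => hu2) hu2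
    (fun y => tendsto_const_nhds) x
  have qv := Tq_tendsto hn hs0 hs1 (F := fun _ => v) (fun _ _ => hv2) hv2
    (fun y => tendsto_const_nhds) x
  have h2 := (qu.mul (lv x)).add ((lu x).mul qv)
  have h3 := Tq_tendsto hn hs0 hs1 (F := FF n s u v) (fun z hz => FF_CB hs0 hz hu2 hv2)
    (hu2.mul hv2) (fun y => (lu y).mul (lv y)) x
  have h4 := (h1.add h2).sub h3
  have e : 0 + ((betaS s)⁻¹ * Lam n s u x * v x + u x * ((betaS s)⁻¹ * Lam n s v x)) -
      (betaS s)⁻¹ * Lam n s (fun y => u y * v y) x = -(2 * (betaS s)⁻¹ * Gamma1 n s u v x) := by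
    unfold Gamma1; ring
  rw [← e]
  refine h4.congr fun z => ?_
  unfold HH AA; ring

theorem HH_top {s M : ℝ} (hs0 : 0 < s)
    {u v : En n → ℝ} (hu : CB 4 M u) (hv : CB 4 M v) (x : En n) :
    Tendsto (HH n s u v x) atTop (𝓝 0) := by
  have h0 : Tendsto (fun z : ℝ => (3 * (n + 4 * s) * (M * M)) * z ^ (-(2 * s))) atTop (𝓝 0) := by
    have := (tendsto_rpow_neg_atTop (y := 2 * s) (by positivity)).const_mul
      (3 * (n + 4 * s) * (M * M))
    simpa using this
  refine squeeze_zero_norm' ?_ h0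
  filter_upwards [eventually_gt_atTop 0] with z hz
  have hu2 : CB 0 M u := hu.le (by omega)
  have hv2 : CB 0 M v := hv.le (by omega)
  have hA := ((Tq_decay hs0 hz hu2).mul (TP_CB hs0 hz hv2)).add
    ((TP_CB hs0 hz hu2).mul (Tq_decay hs0 hz hv2))
  have b1 := (TP_CB hs0 hz hA).bound x
  have b2 := (Tq_decay hs0 hz (FF_CB hs0 hz hu2 hv2)).bound x
  refine (abs_sub _ _).trans ((add_le_add b1 b2).trans (le_of_eq ?_))
  ring

theorem TP_meas {s : ℝ} {w : En n → ℝ} (hw : Continuous w) :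
    Measurable (Function.uncurry fun z x => TT (Pker n s z) w x) :=
  TT_measurable (w := fun _ => w) (Pker_meas n s) (hw.measurable.comp measurable_snd)

theorem TQ_meas {s : ℝ} {w : En n → ℝ} (hw : Continuous w) :
    Measurable (Function.uncurry fun z x => TT (Qk n s z) w x) :=
  TT_measurable (w := fun _ => w) (Qk_meas n s) (hw.measurable.comp measurable_snd)

theorem SS_meas {s M : ℝ} {u v : En n → ℝ} (hu : CB 2 M u) (hv : CB 2 M v) :
    Measurable (Function.uncurry (SS n s u v)) := by
  have h1 : Measurable (fun p : ℝ × En n => ∑ i, TT (Pker n s p.1) (pd i u) p.2 *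
      TT (Pker n s p.1) (pd i v) p.2) := by
    refine Finset.measurable_sum _ fun i _ => ?_
    exact (TP_meas (hu.2.2 i).cont).mul (TP_meas (hv.2.2 i).cont)
  exact h1.add ((TQ_meas hu.cont).mul (TQ_meas hv.cont))

/-- The integrand of the `Γ₁` formula. -/
def JJ (n : ℕ) (s : ℝ) (u v : En n → ℝ) (z : ℝ) (x : En n) : ℝ :=
  z ^ (1 - 2 * s) * TT (Pker n s z) (SS n s u v z) x

theorem JJ_meas {s M : ℝ} {u v : En n → ℝ} (hu : CB 2 M u) (hv : CB 2 M v) :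
    Measurable (Function.uncurry (JJ n s u v)) := by
  have h1 : Measurable (fun p : ℝ × En n => p.1 ^ (1 - 2 * s)) := by fun_prop
  exact h1.mul (TT_measurable (Pker_meas n s) (SS_meas hu hv))

theorem JJ_CB (hn : 1 ≤ n) {s z M : ℝ} (hs0 : 0 < s) (hs1 : s < 1) (hz : 0 < z) {u v : En n → ℝ}
    {k : ℕ} (hu : CB (k + 2) M u) (hv : CB (k + 2) M v) :
    CB k ((n + 1) * (2 ^ k * (cE n s * M) ^ 2) * (z ^ (1 - 2 * s) * rho s z ^ 2))
      (JJ n s u v z) := by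
  have h := (TP_CB hs0 hz (SS_CB hn hs0 hs1 hz hu hv)).const_mul (z ^ (1 - 2 * s))
  rw [abs_of_pos (Real.rpow_pos_of_pos hz _)] at h
  exact h.mono (le_of_eq (by ring))

theorem JJ_integrable (hn : 1 ≤ n) {s M : ℝ} (hs0 : 0 < s) (hs1 : s < 1)
    {u v : En n → ℝ} (hu : CB 2 M u) (hv : CB 2 M v) (x : En n) :
    IntegrableOn (fun z => JJ n s u v z x) (Ioi 0) := by
  refine Integrable.mono' ((rho_integrable hs0 hs1).const_mul
    ((n + 1) * (2 ^ 0 * (cE n s * M) ^ 2))) ?_ ?_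
  · exact ((JJ_meas hu hv).comp measurable_prodMk_right).aestronglyMeasurable
  · filter_upwards [ae_restrict_mem measurableSet_Ioi] with z hz
    exact (JJ_CB (k := 0) hn hs0 hs1 hz hu hv).bound x

theorem Gamma1_formula (hn : 1 ≤ n) {s M : ℝ} (hs0 : 0 < s) (hs1 : s < 1)
    {u v : En n → ℝ} (hu : CB 4 M u) (hv : CB 4 M v) (x : En n) :
    Gamma1 n s u v x = betaS s * ∫ z in Ioi (0 : ℝ), JJ n s u v z x := by
  have hb := betaS_pos hs0 hs1
  set L := -(2 * (betaS s)⁻¹ * Gamma1 n s u v x) with hL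
  let f : ℝ → ℝ := Function.update (HH n s u v x) 0 L
  have hf : ∀ z, 0 < z → f =ᶠ[𝓝 z] HH n s u v x := fun z hz => by
    filter_upwards [eventually_ne_nhds hz.ne'] with y hy
    exact Function.update_of_ne hy _ _
  have hc : ContinuousWithinAt f (Ici 0) 0 := by
    rw [← continuousWithinAt_Ioi_iff_Ici]
    have : f 0 = L := Function.update_self _ _ _
    unfold ContinuousWithinAt
    rw [this]
    refine (HH_zero hn hs0 hs1 hu hv x).congr' ?_
    filter_upwards [self_mem_nhdsWithin] with z hz
    exact (Function.update_of_ne (ne_of_gt hz) _ _).symm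
  have hd : ∀ z ∈ Ioi (0 : ℝ), HasDerivAt f (2 * JJ n s u v z x) z := fun z hz =>
    (HH_hasDerivAt hn hs0 hs1 hz hu hv x).congr_of_eventuallyEq (hf z hz)
  have ht : Tendsto f atTop (𝓝 0) := by
    refine (HH_top hs0 hu hv x).congr' ?_
    filter_upwards [eventually_gt_atTop 0] with z hz
    exact (Function.update_of_ne hz.ne' _ _).symm
  have := integral_Ioi_of_hasDerivAt_of_tendsto hc hd
    ((JJ_integrable hn hs0 hs1 (hu.le (by omega)) (hv.le (by omega)) x).const_mul 2) ht
  rw [integral_const_mul] at this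
  have e0 : f 0 = L := Function.update_self _ _ _
  rw [e0, hL] at this
  have h3 : ∫ z in Ioi (0 : ℝ), JJ n s u v z x = (betaS s)⁻¹ * Gamma1 n s u v x := by
    linarith
  rw [h3]
  field_simp
end

open MeasureTheory Filter Set
open scoped Topology ENNReal NNReal

section

variable {n : ℕ}

/-! ### The representation of `Γ₂` -/

theorem CSext_slice (s : ℝ) (u : En n → ℝ) (z : ℝ) :
    (fun y => CSext n s u y z) = TT (Pker n s z) u := by
  funext y
  exact Pconv_eq n s z u y

theorem CSext_deriv {s z M : ℝ} (hs0 : 0 < s) (hz : 0 < z) {u : En n → ℝ} {k : ℕ}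
    (hu : CB k M u) : (fun y => deriv (CSext n s u y) z) = TT (Qk n s z) u := by
  funext y
  have : CSext n s u y = fun z => TT (Pker n s z) u y := funext fun z => Pconv_eq n s z u y
  rw [this]
  exact (TP_hasDerivAt hs0 hz hu y).deriv

theorem Gamma1_CB (hn : 1 ≤ n) {s M : ℝ} (hs0 : 0 < s) (hs1 : s < 1) {u : En n → ℝ}
    (hu : CB 4 M u) : ∃ N, CB 2 N (Gamma1 n s u u) := by
  have h1 := (Lam_CB (k := 2) hn hs0 hs1 (hu.mul hu)).const_mul (1 / 2)
  have h2 := ((hu.le (l := 2) (by omega)).mul (Lam_CB (k := 2) hn hs0 hs1 hu)).const_mul (-1)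
  have e : Gamma1 n s u u = fun x => 1 / 2 * Lam n s (fun y => u y * u y) x
      + -1 * (u x * Lam n s u x) := by
    funext x; unfold Gamma1; ring
  rw [e]
  exact ⟨_, h1.add h2⟩

theorem slice_identity (hn : 1 ≤ n) {s z M : ℝ} (hs0 : 0 < s) (hs1 : s < 1) (hz : 0 < z)
    {u : En n → ℝ} (hu : CB 6 M u) (y : En n) :
    ((1 / 2) * Lam n s (fun y' => ∑ i, (pd i (fun y'' => CSext n s u y'' z) y') ^ 2) y
        - ∑ i, pd i (fun y' => CSext n s u y' z) y
            * pd i (Lam n s (fun y' => CSext n s u y' z)) y)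
      + Gamma1 n s (fun y' => deriv (CSext n s u y') z)
          (fun y' => deriv (CSext n s u y') z) y =
    1 / 2 * Lam n s (SS n s u u z) y + -1 * SS n s u (Lam n s u) z y := by
  have hP := Pker_integrable (n := n) hs0 hz
  have hPm := (Pker_cont (n := n) (s := s) hz).measurable
  have hQ := Qk_integrable (n := n) hs0 hz
  have hQm := (Qk_cont (n := n) (s := s) hz).measurable
  have hL := Lam_CB (k := 4) hn hs0 hs1 hu
  rw [CSext_deriv hs0 hz hu, CSext_slice, TT_Lam hn hs0 hs1 hP hPm (hu.le (by omega))]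
  simp only [pd_TT (j := 5) hP hu, pd_TT (j := 3) hP hL]
  have c1 := CB.sum (Finset.univ : Finset (Fin n))
    (f := fun i y => TT (Pker n s z) (pd i u) y * TT (Pker n s z) (pd i u) y)
    (fun i => (dx_CB (k := 2) hs0 hz (hu.le (by omega)) i).mul
      (dx_CB (k := 2) hs0 hz (hu.le (by omega)) i))
  have c2 := (dz_CB (k := 2) hn hs0 hs1 hz (hu.le (by omega))).mul
    (dz_CB (k := 2) hn hs0 hs1 hz (hu.le (by omega)))
  have e1 := Lam_add hn hs0 hs1 c1 c2 y
  have e2 : Lam n s (SS n s u u z) y = _ := e1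
  rw [e2]
  unfold Gamma1 SS
  rw [TT_Lam hn hs0 hs1 hQ hQm (hu.le (by omega))]
  simp only [pow_two]
  ring

theorem Gamma2_aux (hn : 1 ≤ n) {s M : ℝ} (hs0 : 0 < s) (hs1 : s < 1)
    {u : En n → ℝ} (hu0 : CB 8 M u) (x : En n) :
    (1 / 2) * Lam n s (Gamma1 n s u u) x - Gamma1 n s u (Lam n s u) x =
        betaS s *
          ∫ z in Ioi (0 : ℝ),
            Pconv n s z
              (fun y =>
                ((1 / 2) * Lam n s (fun y' => ∑ i, (pd i (fun y'' => CSext n s u y'' z) y') ^ 2) y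
                    - ∑ i, pd i (fun y' => CSext n s u y' z) y
                        * pd i (Lam n s (fun y' => CSext n s u y' z)) y)
                  + Gamma1 n s (fun y' => deriv (CSext n s u y') z)
                      (fun y' => deriv (CSext n s u y') z) y) x
              * z ^ (1 - 2 * s) := by
  have hb := betaS_pos hs0 hs1
  obtain ⟨N, hu, hv⟩ : ∃ N, CB 6 N u ∧ CB 6 N (Lam n s u) :=
    ⟨max M (cL n s * M), (hu0.le (by omega)).mono (le_max_left _ _),
      (Lam_CB (k := 6) hn hs0 hs1 hu0).mono (le_max_right _ _)⟩
  have hu4 : CB 4 N u := hu.le (by omega)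
  have hv4 : CB 4 N (Lam n s u) := hv.le (by omega)
  have eG : Gamma1 n s u u = fun x => betaS s * ∫ z in Ioi (0 : ℝ), JJ n s u u z x :=
    funext fun x => Gamma1_formula hn hs0 hs1 hu4 hu4 x
  obtain ⟨K, hK⟩ := Gamma1_CB hn hs0 hs1 hu4
  have hF : CB 2 (|(betaS s)⁻¹| * K) (fun x => ∫ z in Ioi (0 : ℝ), JJ n s u u z x) := by
    have := hK.const_mul (betaS s)⁻¹
    rw [eG] at this
    simpa only [inv_mul_cancel_left₀ hb.ne'] using this
  obtain ⟨hL1, hL2⟩ := Lam_integral hn hs0 hs1 (μ := volume.restrict (Ioi (0 : ℝ)))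
    (f := JJ n s u u)
    (g := fun z => (n + 1) * (2 ^ 2 * (cE n s * N) ^ 2) * (z ^ (1 - 2 * s) * rho s z ^ 2))
    (JJ_meas (hu.le (by omega)) (hu.le (by omega)))
    (by
      filter_upwards [ae_restrict_mem measurableSet_Ioi] with z hz
      exact JJ_CB (k := 2) hn hs0 hs1 hz hu4 hu4)
    ((rho_integrable hs0 hs1).const_mul _) hF x
  have hJ := JJ_integrable hn hs0 hs1 (hu.le (l := 2) (by omega)) (hv.le (by omega)) x
  rw [eG, Lam_const_mul hn hs0 hs1 hF, hL1, Gamma1_formula hn hs0 hs1 hu4 hv4]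
  have e : 1 / 2 * (betaS s * ∫ z in Ioi (0 : ℝ), Lam n s (JJ n s u u z) x) -
      betaS s * ∫ z in Ioi (0 : ℝ), JJ n s u (Lam n s u) z x = betaS s *
        ∫ z in Ioi (0 : ℝ), (1 / 2 * Lam n s (JJ n s u u z) x - JJ n s u (Lam n s u) z x) := by
    rw [integral_sub (hL2.const_mul _) hJ, integral_const_mul]
    ring
  rw [e]
  congr 1
  refine setIntegral_congr_fun measurableSet_Ioi fun z hz => ?_
  have hz' : 0 < z := hz
  have hP := Pker_integrable (n := n) hs0 hz'
  have hPm := (Pker_cont (n := n) (s := s) hz').measurable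
  have c1 := SS_CB (k := 2) hn hs0 hs1 hz' hu4 hu4
  have c3 := SS_CB (k := 4) hn hs0 hs1 hz' hu hu
  have c2 := SS_CB (k := 2) hn hs0 hs1 hz' hu4 hv4
  simp only [slice_identity hn hs0 hs1 hz' hu]
  rw [Pconv_eq, TT_add hP ((Lam_CB (k := 2) hn hs0 hs1 c3).const_mul _) (c2.const_mul _),
    TT_const_mul, TT_const_mul]
  have eJ : JJ n s u u z = fun x => z ^ (1 - 2 * s) * TT (Pker n s z) (SS n s u u z) x := rfl
  rw [eJ, Lam_const_mul hn hs0 hs1 (TP_CB hs0 hz' c1), TT_Lam hn hs0 hs1 hP hPm c1]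
  unfold JJ
  ring
end

/-- **Representation of the second-order carré du champ `Γ₂`** (Corollary, Euclidean case):
`Γ₂(u) = β_s ∫₀^∞ P_z^{(s)} ∗ (B_z + Γ₁(∂_z U(·,z))) z^{1-2s} dz`, where
`B_z = ½ Λ^s(|∇_x U(·,z)|²) - ∇_x U(·,z)·∇_x(Λ^s U(·,z))` on each horizontal slice. -/
theorem Gamma2_representation (n : ℕ) (hn : 1 ≤ n) (s : ℝ) (hs0 : 0 < s) (hs1 : s < 1)
    (u : En n → ℝ) (hu : ContDiff ℝ (⊤ : ℕ∞) u) (huc : HasCompactSupport u)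
    (hint : ∫⁻ p in (univ : Set (En n)) ×ˢ Ioi (0 : ℝ),
      ENNReal.ofReal
        (p.2 ^ (1 - 2 * s) *
          ((∑ i, ∑ j, (pd i (pd j (fun y => CSext n s u y p.2)) p.1) ^ 2)
            + ∑ i, (pd i (fun y => deriv (CSext n s u y) p.2) p.1) ^ 2)) < ⊤) :
    ∀ x : En n,
      (1 / 2) * Lam n s (Gamma1 n s u u) x - Gamma1 n s u (Lam n s u) x =
        betaS s *
          ∫ z in Ioi (0 : ℝ),
            Pconv n s z
              (fun y =>
                ((1 / 2) * Lam n s (fun y' => ∑ i, (pd i (fun y'' => CSext n s u y'' z) y') ^ 2) y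
                    - ∑ i, pd i (fun y' => CSext n s u y' z) y
                        * pd i (Lam n s (fun y' => CSext n s u y' z)) y)
                  + Gamma1 n s (fun y' => deriv (CSext n s u y') z)
                      (fun y' => deriv (CSext n s u y') z) y) x
              * z ^ (1 - 2 * s) := by
  obtain ⟨M, hM⟩ := CB.of_smooth hu huc 8
  exact fun x => Gamma2_aux hn hs0 hs1 hM x
end
end

section
/- Let s ∈ (0,1), q > 1, and u ∈ C_c^∞(ℝⁿ). Then ∫_{ℝⁿ} |u(x)|^{q−2} u(x) · (−Δ)^s u(x) dx ≥ (4(q−1)/q²) · (C(n,s)/2) · ∬_{ℝⁿ×ℝⁿ} ( |u(x)|^{q/2} − |u(y)|^{q/2} )² / |x−y|^{n+2s} dx dy (the Stroock–Varopoulos inequality). -/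
open MeasureTheory Filter Set
open scoped Topology ENNReal NNReal

noncomputable section

lemma sv_pos (q : ℝ) (hq : 1 < q) (a b : ℝ) (hb : 0 ≤ b) (hab : b ≤ a) :
    4 * (q - 1) / q ^ 2 * (a ^ (q / 2) - b ^ (q / 2)) ^ 2 ≤ (a ^ (q - 1) - b ^ (q - 1)) * (a - b) := by
  have i1 : IntervalIntegrable (fun t : ℝ => t ^ (q - 2)) volume b a :=
    intervalIntegral.intervalIntegrable_rpow' (by linarith)
  have i2 : IntervalIntegrable (fun t : ℝ => t ^ (q / 2 - 1)) volume b a :=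
    intervalIntegral.intervalIntegrable_rpow' (by linarith)
  have e1 : ∫ t in b..a, t ^ (q - 2) = (a ^ (q - 1) - b ^ (q - 1)) / (q - 1) := by
    rw [integral_rpow (Or.inl (by linarith))]; ring_nf
  have e2 : ∫ t in b..a, t ^ (q / 2 - 1) = (a ^ (q / 2) - b ^ (q / 2)) / (q / 2) := by
    rw [integral_rpow (Or.inl (by linarith))]; ring_nf
  set A := (a ^ (q - 1) - b ^ (q - 1)) with hA
  set B := (a ^ (q / 2) - b ^ (q / 2)) with hB
  have key : ∀ l : ℝ, 0 ≤ A / (q - 1) * (l * l) + (-2 * (B / (q / 2))) * l + (a - b) := by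
    intro l
    have h0 : 0 ≤ ∫ t in b..a, (l ^ 2 * t ^ (q - 2) - 2 * l * t ^ (q / 2 - 1) + 1) := by
      apply intervalIntegral.integral_nonneg_of_ae_restrict hab
      rw [EventuallyLE, ae_restrict_iff' measurableSet_Icc]
      have : ∀ᵐ t : ℝ, t ≠ 0 := by simp [ae_iff]
      filter_upwards [this] with t ht0 ht
      have ht' : 0 < t := lt_of_le_of_ne (hb.trans ht.1) (Ne.symm ht0)
      have : t ^ (q - 2) = (t ^ (q / 2 - 1)) ^ 2 := by
        rw [← Real.rpow_natCast, ← Real.rpow_mul ht'.le]; congr 1; push_cast; ring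
      rw [this]
      simp only [Pi.zero_apply]
      nlinarith [sq_nonneg (l * t ^ (q / 2 - 1) - 1)]
    rw [intervalIntegral.integral_add ((i1.const_mul _).sub (i2.const_mul _)) (by simp),
      intervalIntegral.integral_sub (i1.const_mul _) (i2.const_mul _),
      intervalIntegral.integral_const_mul, intervalIntegral.integral_const_mul, e1, e2] at h0
    simp only [intervalIntegral.integral_const, smul_eq_mul] at h0
    linarith
  have := discrim_le_zero key
  rw [discrim] at this
  have h1 : 0 < q - 1 := by linarith
  have h2 : (q-1) * (B / (q / 2)) ^ 2 ≤ A * (a - b) := by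
    have : A / (q-1) * (a - b) * (q-1) = A * (a-b) := by field_simp
    nlinarith
  calc _ = (q-1) * (B / (q / 2)) ^ 2 := by field_simp; ring
    _ ≤ _ := h2

lemma rp (q : ℝ) (hq : 1 < q) (a : ℝ) (ha : 0 ≤ a) : a ^ (q - 2) * a = a ^ (q - 1) := by
  rcases ha.eq_or_lt with h | h
  · subst h; rw [Real.zero_rpow (by linarith : q - 1 ≠ 0)]; simp
  · rw [← Real.rpow_add_one h.ne']; ring_nf

lemma sv_opp (q : ℝ) (hq : 1 < q) (a b : ℝ) (ha : 0 ≤ a) (hb : 0 ≤ b) :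
    4 * (q - 1) / q ^ 2 * (a ^ (q / 2) - b ^ (q / 2)) ^ 2 ≤ (a ^ (q - 1) + b ^ (q - 1)) * (a + b) := by
  have h1 : 4 * (q - 1) / q ^ 2 ≤ 1 := by
    rw [div_le_one (by positivity)]; nlinarith [sq_nonneg (q-2)]
  have e : ∀ a : ℝ, 0 ≤ a → (a ^ (q / 2)) ^ 2 = a ^ (q - 1) * a := by
    intro a ha
    rw [← Real.rpow_natCast, ← Real.rpow_mul ha]
    rcases ha.eq_or_lt with h | h
    · subst h; simp; rw [Real.zero_rpow (by linarith)]
    · rw [← Real.rpow_add_one h.ne']; congr 1; push_cast; ring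
  have := e a ha
  have := e b hb
  have : 0 ≤ a ^ (q/2) := by positivity
  have : 0 ≤ b ^ (q/2) := by positivity
  have : 0 ≤ a ^ (q-1) := by positivity
  have : 0 ≤ b ^ (q-1) := by positivity
  calc _ ≤ 1 * (a ^ (q / 2) - b ^ (q / 2)) ^ 2 := by gcongr
    _ ≤ _ := by
      have : 0 ≤ a ^ (q/2) * b ^ (q/2) := by positivity
      have : 0 ≤ a ^ (q-1) * b := by positivity
      have : 0 ≤ b ^ (q-1) * a := by positivity
      nlinarith

lemma sv_point (q : ℝ) (hq : 1 < q) (a b : ℝ) :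
    4 * (q - 1) / q ^ 2 * (|a| ^ (q / 2) - |b| ^ (q / 2)) ^ 2 ≤
      (|a| ^ (q - 2) * a - |b| ^ (q - 2) * b) * (a - b) := by
  wlog hab : |b| ≤ |a| generalizing a b
  · have := this b a (le_of_not_ge hab)
    linarith
  have h1 := sv_pos q hq |a| |b| (abs_nonneg _) hab
  have h2 := sv_opp q hq |a| |b| (abs_nonneg _) (abs_nonneg _)
  rw [← rp q hq _ (abs_nonneg a), ← rp q hq _ (abs_nonneg b)] at h1 h2
  rcases abs_cases a with ⟨ha, _⟩ | ⟨ha, _⟩ <;> rcases abs_cases b with ⟨hb, _⟩ | ⟨hb, _⟩ <;>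
    rw [ha, hb] at h1 h2 ⊢ <;> linarith

-- kernel integrability
lemma ker_int (n : ℕ) (hn : 1 ≤ n) (s : ℝ) (hs0 : 0 < s) (hs1 : s < 1) (M C : ℝ) (hM : 0 ≤ M) (hC : 0 ≤ C) :
    Integrable (fun z : EuclideanSpace ℝ (Fin n) => min M (C * ‖z‖ ^ 2) / ‖z‖ ^ ((n : ℝ) + 2 * s)) := by
  have : Nonempty (Fin n) := ⟨⟨0, hn⟩⟩
  rw [integrable_fun_norm_addHaar volume (f := fun r : ℝ => min M (C * r ^ 2) / r ^ ((n : ℝ) + 2 * s))]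
  have meas : Measurable (fun r : ℝ => r ^ (Module.finrank ℝ (EuclideanSpace ℝ (Fin n)) - 1) • (min M (C * r ^ 2) / r ^ ((n : ℝ) + 2 * s))) := by
    fun_prop
  have conv : ∀ r : ℝ, 0 < r → r ^ (n - 1) * (r ^ ((n : ℝ) + 2 * s))⁻¹ = r ^ (-1 - 2 * s) := by
    intro r hr
    rw [← Real.rpow_natCast, ← Real.rpow_neg hr.le, ← Real.rpow_add hr, Nat.cast_sub hn]
    congr 1; push_cast; ring
  rw [← Ioc_union_Ioi_eq_Ioi (zero_le_one' ℝ), integrableOn_union]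
  constructor
  · have : IntegrableOn (fun r : ℝ => C * r ^ (1 - 2 * s)) (Ioc 0 1) := by
      have := (intervalIntegral.intervalIntegrable_rpow' (a := 0) (b := 1) (r := 1 - 2 * s) (by linarith)).const_mul C
      rwa [intervalIntegrable_iff_integrableOn_Ioc_of_le zero_le_one] at this
    refine Integrable.mono' this meas.aestronglyMeasurable ?_
    refine (ae_restrict_iff' measurableSet_Ioc).2 (ae_of_all _ fun r hr => ?_)
    have hr0 : 0 < r := hr.1
    simp only [finrank_euclideanSpace, Fintype.card_fin, smul_eq_mul]
    rw [Real.norm_of_nonneg (by positivity)]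
    calc _ = min M (C * r ^ 2) * (r ^ (n - 1) * (r ^ ((n : ℝ) + 2 * s))⁻¹) := by ring
      _ = min M (C * r ^ 2) * r ^ (-1 - 2 * s) := by rw [conv r hr0]
      _ ≤ (C * r ^ 2) * r ^ (-1 - 2 * s) := by gcongr; exact min_le_right _ _
      _ = C * r ^ (1 - 2 * s) := by
        rw [← Real.rpow_natCast, mul_assoc, ← Real.rpow_add hr0]; congr 2; push_cast; ring
  · have : IntegrableOn (fun r : ℝ => M * r ^ (-1 - 2 * s)) (Ioi 1) :=
      (integrableOn_Ioi_rpow_of_lt (by linarith) one_pos).const_mul M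
    refine Integrable.mono' this meas.aestronglyMeasurable ?_
    refine (ae_restrict_iff' measurableSet_Ioi).2 (ae_of_all _ fun r hr => ?_)
    have hr0 : 0 < r := one_pos.trans hr
    simp only [finrank_euclideanSpace, Fintype.card_fin, smul_eq_mul]
    rw [Real.norm_of_nonneg (by positivity)]
    calc _ = min M (C * r ^ 2) * (r ^ (n - 1) * (r ^ ((n : ℝ) + 2 * s))⁻¹) := by ring
      _ = min M (C * r ^ 2) * r ^ (-1 - 2 * s) := by rw [conv r hr0]
      _ ≤ M * r ^ (-1 - 2 * s) := by gcongr; exact min_le_left _ _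

lemma second_diff {n : ℕ} (u : EuclideanSpace ℝ (Fin n) → ℝ) (hu : ContDiff ℝ (⊤ : ℕ∞) u) (huc : HasCompactSupport u) :
    ∃ C : ℝ, 0 ≤ C ∧ ∀ x z, |2 * u x - u (x + z) - u (x - z)| ≤ C * ‖z‖ ^ 2 := by
  obtain ⟨L, hL⟩ := (hu.fderiv_right (m := 1) (by norm_cast)).lipschitzWith_of_hasCompactSupport (huc.fderiv ℝ) (by simp)
  refine ⟨2 * L, by positivity, fun x z => ?_⟩
  have hd : Differentiable ℝ u := hu.differentiable (by simp)
  have h := (convex_closedBall (0 : EuclideanSpace ℝ (Fin n)) ‖z‖).norm_image_sub_le_of_norm_hasFDerivWithin_le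
    (f := fun w => u (x + w) + u (x - w)) (f' := fun w => fderiv ℝ u (x + w) - fderiv ℝ u (x - w))
    (C := 2 * L * ‖z‖) (x := 0) (y := z) ?_ ?_ (by simp) (by simp)
  · simp only [add_zero, sub_zero, Real.norm_eq_abs] at h
    rw [← abs_neg]
    calc _ = _ := by congr 1; ring
      _ ≤ _ := h
      _ = _ := by ring
  · intro w hw
    have h1 : HasFDerivAt (fun w => u (x + w)) (fderiv ℝ u (x + w)) w := by
      simpa [Function.comp_def] using (hd (x + w)).hasFDerivAt.comp w ((hasFDerivAt_id w).const_add x)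
    have h2 : HasFDerivAt (fun w => u (x - w)) (-fderiv ℝ u (x - w)) w := by
      simpa [Function.comp_def] using (hd (x - w)).hasFDerivAt.comp w ((hasFDerivAt_id w).const_sub x)
    simpa [sub_eq_add_neg, Pi.add_def] using (h1.add h2).hasFDerivWithinAt
  · intro w hw
    have hw' : ‖w‖ ≤ ‖z‖ := by simpa using hw
    have := hL.dist_le_mul (x + w) (x - w)
    rw [dist_eq_norm, dist_eq_norm, show x + w - (x - w) = (2:ℝ) • w by rw [two_smul]; abel, norm_smul] at this
    calc _ ≤ _ := this
      _ = 2 * L * ‖w‖ := by simp; ring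
      _ ≤ _ := by gcongr

/-- Truncated kernel. -/
def svK (n : ℕ) (s ε : ℝ) (z : EuclideanSpace ℝ (Fin n)) : ℝ :=
  if ε < ‖z‖ then (‖z‖ ^ ((n : ℝ) + 2 * s))⁻¹ else 0

lemma svK_nonneg (n : ℕ) (s ε : ℝ) (z : EuclideanSpace ℝ (Fin n)) : 0 ≤ svK n s ε z := by
  unfold svK; split_ifs <;> positivity

lemma svK_le (n : ℕ) (s ε : ℝ) (z : EuclideanSpace ℝ (Fin n)) :
    svK n s ε z ≤ (‖z‖ ^ ((n : ℝ) + 2 * s))⁻¹ := by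
  unfold svK; split_ifs
  · exact le_rfl
  · positivity

lemma svK_neg (n : ℕ) (s ε : ℝ) (z : EuclideanSpace ℝ (Fin n)) : svK n s ε (-z) = svK n s ε z := by
  simp [svK]

lemma svK_meas (n : ℕ) (s ε : ℝ) : Measurable (svK n s ε) := by
  unfold svK
  exact Measurable.ite (measurableSet_lt measurable_const measurable_norm) (by fun_prop) measurable_const

lemma svK_int (n : ℕ) (hn : 1 ≤ n) (s : ℝ) (hs0 : 0 < s) (hs1 : s < 1) (ε : ℝ) (hε : 0 < ε) :
    Integrable (svK n s ε) := by
  refine (ker_int n hn s hs0 hs1 1 ((ε ^ 2)⁻¹) zero_le_one (by positivity)).mono'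
    (svK_meas n s ε).aestronglyMeasurable (ae_of_all _ fun z => ?_)
  rw [Real.norm_of_nonneg (svK_nonneg ..)]
  unfold svK; split_ifs with h
  · have : 1 ≤ (ε ^ 2)⁻¹ * ‖z‖ ^ 2 := by
      rw [inv_mul_eq_div, one_le_div (by positivity)]; gcongr
    rw [min_eq_left this, one_div]
  · positivity

lemma svK_tendsto (n : ℕ) (s : ℝ) (z : EuclideanSpace ℝ (Fin n)) (hz : z ≠ 0) :
    Tendsto (fun ε => svK n s ε z) (𝓝[>] 0) (𝓝 (‖z‖ ^ ((n : ℝ) + 2 * s))⁻¹) := by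
  apply tendsto_const_nhds.congr'
  have : ∀ᶠ ε : ℝ in 𝓝[>] 0, ε < ‖z‖ :=
    mem_nhdsWithin_of_mem_nhds (Iio_mem_nhds (norm_pos_iff.2 hz))
  filter_upwards [this] with ε h
  simp [svK, h]

lemma sv_F_eq (n : ℕ) (hn : 1 ≤ n) (s : ℝ) (hs0 : 0 < s) (hs1 : s < 1) (ε : ℝ) (hε : 0 < ε)
    (u : EuclideanSpace ℝ (Fin n) → ℝ) (hu : Continuous u) (M : ℝ) (hM : ∀ x, |u x| ≤ M)
    (x : EuclideanSpace ℝ (Fin n)) :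
    ∫ y, (u x - u y) * svK n s ε (x - y) =
      ∫ z, (2 * u x - u (x + z) - u (x - z)) / 2 * svK n s ε z := by
  have m1 := svK_meas n s ε
  have i1 : Integrable (fun z => (u x - u (x - z)) * svK n s ε z) := by
    refine ((svK_int n hn s hs0 hs1 ε hε).const_mul (M + M)).mono'
      (by fun_prop) (ae_of_all _ fun z => ?_)
    rw [norm_mul, Real.norm_of_nonneg (svK_nonneg ..)]
    gcongr
    · exact svK_nonneg ..
    · exact (abs_sub _ _).trans (add_le_add (hM _) (hM _))
  have e1 : ∫ y, (u x - u y) * svK n s ε (x - y) = ∫ z, (u x - u (x - z)) * svK n s ε z := by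
    rw [← integral_sub_left_eq_self _ _ x]
    simp
  have i2 := i1.comp_neg
  have e2 := integral_neg_eq_self (fun z => (u x - u (x - z)) * svK n s ε z) volume
  have e3 := integral_add i1 i2
  rw [e2] at e3
  rw [e1]
  have e4 : ∫ z, (2 * u x - u (x + z) - u (x - z)) / 2 * svK n s ε z =
    (1/2) * ∫ z, ((u x - u (x - z)) * svK n s ε z + (u x - u (x - -z)) * svK n s ε (-z)) := by
    rw [← integral_const_mul]
    congr 1; ext z; rw [svK_neg, sub_neg_eq_add]; ring
  rw [e4, e3]; ring

lemma sv_set_eq (n : ℕ) (s ε : ℝ) (u : EuclideanSpace ℝ (Fin n) → ℝ) (x : EuclideanSpace ℝ (Fin n)) :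
    ∫ y in {y : EuclideanSpace ℝ (Fin n) | ε < ‖x - y‖}, (u x - u y) / ‖x - y‖ ^ ((n : ℝ) + 2 * s) =
    ∫ y, (u x - u y) * svK n s ε (x - y) := by
  rw [← integral_indicator (measurableSet_lt measurable_const (by fun_prop))]
  congr 1; ext y
  by_cases h : ε < ‖x - y‖ <;> simp [indicator, svK, h, div_eq_mul_inv]

lemma sv_main (n : ℕ) (hn : 1 ≤ n) (s : ℝ) (hs0 : 0 < s) (hs1 : s < 1)
    (u : EuclideanSpace ℝ (Fin n) → ℝ) (hu : ContDiff ℝ (⊤ : ℕ∞) u) (huc : HasCompactSupport u) :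
    ∃ F : EuclideanSpace ℝ (Fin n) → ℝ, ∃ B : ℝ,
      (∀ x, Tendsto (fun ε => ∫ y, (u x - u y) * svK n s ε (x - y)) (𝓝[>] 0) (𝓝 (F x))) ∧
      (∀ ε > 0, ∀ x, |∫ y, (u x - u y) * svK n s ε (x - y)| ≤ B) := by
  obtain ⟨M, hM⟩ := huc.exists_bound_of_continuous hu.continuous
  have hM' : ∀ x, |u x| ≤ M := hM
  have hM0 : 0 ≤ M := (abs_nonneg _).trans (hM' 0)
  obtain ⟨C, hC, hD⟩ := second_diff u hu huc
  have hc := hu.continuous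
  have G := ker_int n hn s hs0 hs1 (4 * M) C (by positivity) hC
  have bd : ∀ ε x z, ‖(2 * u x - u (x + z) - u (x - z)) / 2 * svK n s ε z‖ ≤
      min (4 * M) (C * ‖z‖ ^ 2) / ‖z‖ ^ ((n : ℝ) + 2 * s) := by
    intro ε x z
    rw [norm_mul, Real.norm_of_nonneg (svK_nonneg ..), div_eq_mul_inv (min _ _)]
    have h1 : |2 * u x - u (x + z) - u (x - z)| ≤ min (4 * M) (C * ‖z‖ ^ 2) := by
      refine le_min ?_ (hD x z)
      have a1 := abs_le.1 (hM' x)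
      have a2 := abs_le.1 (hM' (x + z))
      have a3 := abs_le.1 (hM' (x - z))
      rw [abs_le]; constructor <;> linarith
    gcongr
    · exact svK_nonneg ..
    · rw [Real.norm_eq_abs, abs_div, abs_two]
      have := abs_nonneg (2 * u x - u (x + z) - u (x - z))
      linarith
    · exact svK_le ..
  refine ⟨fun x => ∫ z, (2 * u x - u (x + z) - u (x - z)) / 2 * (‖z‖ ^ ((n : ℝ) + 2 * s))⁻¹,
    ∫ z : EuclideanSpace ℝ (Fin n), min (4 * M) (C * ‖z‖ ^ 2) / ‖z‖ ^ ((n : ℝ) + 2 * s), ?_, ?_⟩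
  · intro x
    have : Tendsto (fun ε => ∫ z, (2 * u x - u (x + z) - u (x - z)) / 2 * svK n s ε z) (𝓝[>] 0)
        (𝓝 (∫ z, (2 * u x - u (x + z) - u (x - z)) / 2 * (‖z‖ ^ ((n : ℝ) + 2 * s))⁻¹)) := by
      apply tendsto_integral_filter_of_dominated_convergence _ _ (Eventually.of_forall fun ε => ae_of_all _ (bd ε x)) G
      · refine ae_of_all _ fun z => ?_
        by_cases hz : z = 0
        · subst hz
          have : (2 * u x - u (x + 0) - u (x - 0)) / 2 = 0 := by simp; ring
          simp only [this, zero_mul]; exact tendsto_const_nhds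
        · exact (svK_tendsto n s z hz).const_mul _
      · refine Eventually.of_forall fun ε => ?_
        have m1 := svK_meas n s ε
        fun_prop
    refine this.congr' ?_
    filter_upwards [self_mem_nhdsWithin] with ε hε
    exact (sv_F_eq n hn s hs0 hs1 ε hε u hc M hM' x).symm
  · intro ε hε x
    rw [sv_F_eq n hn s hs0 hs1 ε hε u hc M hM' x]
    exact norm_integral_le_of_norm_le G (ae_of_all _ (bd ε x))

lemma sv_prod_int (n : ℕ) (hn : 1 ≤ n) (s : ℝ) (hs0 : 0 < s) (hs1 : s < 1) (ε : ℝ) (hε : 0 < ε)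
    (u w : EuclideanSpace ℝ (Fin n) → ℝ) (hu : Continuous u) (M : ℝ) (hM : ∀ x, |u x| ≤ M)
    (hw : Continuous w) (hwi : Integrable w) :
    Integrable (fun p : EuclideanSpace ℝ (Fin n) × EuclideanSpace ℝ (Fin n) =>
      w p.1 * (u p.1 - u p.2) * svK n s ε (p.1 - p.2)) := by
  have m1 := svK_meas n s ε
  have h := hwi.convolution_integrand (ContinuousLinearMap.mul ℝ ℝ) (svK_int n hn s hs0 hs1 ε hε)
  have h2 := (h.swap.norm).const_mul (M + M)
  have m2 := hu.measurable
  have m3 := hw.measurable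
  refine h2.mono' (Measurable.aestronglyMeasurable (by fun_prop)) (ae_of_all _ fun p => ?_)
  simp only [Function.comp, Prod.fst_swap, Prod.snd_swap, ContinuousLinearMap.mul_apply', norm_mul]
  rw [show p.2 - p.1 = -(p.1 - p.2) by abel, svK_neg]
  have : ‖u p.1 - u p.2‖ ≤ M + M := (abs_sub _ _).trans (add_le_add (hM _) (hM _))
  calc _ = ‖u p.1 - u p.2‖ * (‖w p.1‖ * ‖svK n s ε (p.1 - p.2)‖) := by ring
    _ ≤ _ := by gcongr

lemma sv_sym (n : ℕ) (hn : 1 ≤ n) (s : ℝ) (hs0 : 0 < s) (hs1 : s < 1) (ε : ℝ) (hε : 0 < ε)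
    (u w : EuclideanSpace ℝ (Fin n) → ℝ) (hu : Continuous u) (M : ℝ) (hM : ∀ x, |u x| ≤ M)
    (hw : Continuous w) (hwi : Integrable w) :
    Integrable (fun p : EuclideanSpace ℝ (Fin n) × EuclideanSpace ℝ (Fin n) =>
      (w p.1 - w p.2) * (u p.1 - u p.2) * svK n s ε (p.1 - p.2)) ∧
    ∫ x, w x * ∫ y, (u x - u y) * svK n s ε (x - y) =
    (1 / 2) * ∫ p : EuclideanSpace ℝ (Fin n) × EuclideanSpace ℝ (Fin n),
      (w p.1 - w p.2) * (u p.1 - u p.2) * svK n s ε (p.1 - p.2) := by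
  have i1 := sv_prod_int n hn s hs0 hs1 ε hε u w hu M hM hw hwi
  have i2 := i1.swap
  have e1 := integral_prod_swap (μ := volume) (ν := volume) (fun p : EuclideanSpace ℝ (Fin n) × EuclideanSpace ℝ (Fin n) =>
      w p.1 * (u p.1 - u p.2) * svK n s ε (p.1 - p.2))
  have ee : ∀ p : EuclideanSpace ℝ (Fin n) × EuclideanSpace ℝ (Fin n),
      (w p.1 - w p.2) * (u p.1 - u p.2) * svK n s ε (p.1 - p.2) =
      w p.1 * (u p.1 - u p.2) * svK n s ε (p.1 - p.2) +
      w p.2 * (u p.2 - u p.1) * svK n s ε (p.2 - p.1) := by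
    intro p
    rw [show p.2 - p.1 = -(p.1 - p.2) by abel, svK_neg]; ring
  constructor
  · simp_rw [ee]; exact i1.add i2
  · simp_rw [ee]
    have e3 := integral_add i1 i2
    simp only [Function.comp, Prod.fst_swap, Prod.snd_swap] at e3
    simp only [Prod.fst_swap, Prod.snd_swap] at e1
    rw [Measure.volume_eq_prod] at e3 ⊢
    rw [e3, e1]
    rw [integral_prod _ i1]
    simp_rw [mul_assoc, integral_const_mul]
    ring

lemma sv_fin (n : ℕ) (hn : 1 ≤ n) (s : ℝ) (hs0 : 0 < s) (hs1 : s < 1)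
    (q : ℝ) (hq : 1 < q)
    (u : EuclideanSpace ℝ (Fin n) → ℝ) (hu : ContDiff ℝ (⊤ : ℕ∞) u) (huc : HasCompactSupport u)
    (F : EuclideanSpace ℝ (Fin n) → ℝ) (B : ℝ)
    (hF : ∀ x, Tendsto (fun ε => ∫ y, (u x - u y) * svK n s ε (x - y)) (𝓝[>] 0) (𝓝 (F x)))
    (hB : ∀ ε > 0, ∀ x, |∫ y, (u x - u y) * svK n s ε (x - y)| ≤ B) :
    (4 * (q - 1) / q ^ 2) * (1 / 2) *
        ∫ p : EuclideanSpace ℝ (Fin n) × EuclideanSpace ℝ (Fin n),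
          (|u p.1| ^ (q / 2) - |u p.2| ^ (q / 2)) ^ 2 / ‖p.1 - p.2‖ ^ ((n : ℝ) + 2 * s) ≤
    ∫ x, |u x| ^ (q - 2) * u x * F x := by
  have hc := hu.continuous
  obtain ⟨M, hM⟩ := huc.exists_bound_of_continuous hu.continuous
  have hM' : ∀ x, |u x| ≤ M := hM
  set w : EuclideanSpace ℝ (Fin n) → ℝ := fun x => |u x| ^ (q - 2) * u x with hw
  have g : Continuous (fun t : ℝ => |t| ^ (q - 2) * t) := by
    rw [continuous_iff_continuousAt]
    intro t
    by_cases ht : t = 0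
    · subst ht
      rw [ContinuousAt, mul_zero, tendsto_zero_iff_abs_tendsto_zero]
      have : Tendsto (fun t : ℝ => |t| ^ (q - 1)) (𝓝 0) (𝓝 0) := by
        have : Continuous (fun t : ℝ => |t| ^ (q - 1)) :=
          continuous_abs.rpow_const (fun _ => Or.inr (by linarith))
        have h := this.tendsto 0
        simpa [Real.zero_rpow (by linarith : q - 1 ≠ 0)] using h
      refine this.congr fun t => ?_
      simp only [Function.comp, abs_mul]
      rw [abs_of_nonneg (by positivity : 0 ≤ |t| ^ (q - 2)), rp q hq _ (abs_nonneg t)]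
    · exact (continuous_abs.continuousAt.rpow_const (Or.inl (by simpa using ht))).mul continuousAt_id
  have hwc : Continuous w := g.comp hc
  have hwcs : HasCompactSupport w := huc.comp_left (g := fun t : ℝ => |t| ^ (q - 2) * t) (by simp)
  have hwi : Integrable w := hwc.integrable_of_hasCompactSupport hwcs
  have lim : Tendsto (fun ε => ∫ x, w x * ∫ y, (u x - u y) * svK n s ε (x - y)) (𝓝[>] 0)
      (𝓝 (∫ x, w x * F x)) := by
    apply tendsto_integral_filter_of_dominated_convergence (fun x => ‖w x‖ * B) _ _ (hwi.norm.mul_const B)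
    · exact ae_of_all _ fun x => (hF x).const_mul _
    · refine Eventually.of_forall fun ε => ?_
      have m1 := svK_meas n s ε
      refine hwc.aestronglyMeasurable.mul ?_
      apply StronglyMeasurable.aestronglyMeasurable
      apply StronglyMeasurable.integral_prod_right (f := fun x y : EuclideanSpace ℝ (Fin n) =>
        (u x - u y) * svK n s ε (x - y))
      apply Measurable.stronglyMeasurable
      have m2 := hc.measurable
      unfold Function.uncurry
      fun_prop
    · filter_upwards [self_mem_nhdsWithin] with ε hε
      refine ae_of_all _ fun x => ?_
      rw [norm_mul]
      gcongr
      exact hB ε hε x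
  have hk : 0 ≤ 4 * (q - 1) / q ^ 2 := div_nonneg (by linarith) (by positivity)
  by_cases hi : Integrable (fun p : EuclideanSpace ℝ (Fin n) × EuclideanSpace ℝ (Fin n) =>
          (|u p.1| ^ (q / 2) - |u p.2| ^ (q / 2)) ^ 2 / ‖p.1 - p.2‖ ^ ((n : ℝ) + 2 * s))
  · have bd : ∀ ε, ∀ p : EuclideanSpace ℝ (Fin n) × EuclideanSpace ℝ (Fin n),
        ‖(|u p.1| ^ (q / 2) - |u p.2| ^ (q / 2)) ^ 2 * svK n s ε (p.1 - p.2)‖ ≤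
        (|u p.1| ^ (q / 2) - |u p.2| ^ (q / 2)) ^ 2 / ‖p.1 - p.2‖ ^ ((n : ℝ) + 2 * s) := by
      intro ε p
      rw [Real.norm_of_nonneg (mul_nonneg (sq_nonneg _) (svK_nonneg ..)),
        div_eq_mul_inv ((|u p.1| ^ (q / 2) - |u p.2| ^ (q / 2)) ^ 2)]
      exact mul_le_mul_of_nonneg_left (svK_le ..) (sq_nonneg _)
    have ms : ∀ ε, AEStronglyMeasurable (fun p : EuclideanSpace ℝ (Fin n) × EuclideanSpace ℝ (Fin n) =>
        (|u p.1| ^ (q / 2) - |u p.2| ^ (q / 2)) ^ 2 * svK n s ε (p.1 - p.2)) := by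
      intro ε
      have m1 := svK_meas n s ε
      have m2 := hc.measurable
      apply Measurable.aestronglyMeasurable
      fun_prop
    have lim2 : Tendsto (fun ε => ∫ p : EuclideanSpace ℝ (Fin n) × EuclideanSpace ℝ (Fin n),
        (|u p.1| ^ (q / 2) - |u p.2| ^ (q / 2)) ^ 2 * svK n s ε (p.1 - p.2)) (𝓝[>] 0)
        (𝓝 (∫ p : EuclideanSpace ℝ (Fin n) × EuclideanSpace ℝ (Fin n),
          (|u p.1| ^ (q / 2) - |u p.2| ^ (q / 2)) ^ 2 / ‖p.1 - p.2‖ ^ ((n : ℝ) + 2 * s))) := by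
      apply tendsto_integral_filter_of_dominated_convergence _ (Eventually.of_forall ms)
        (Eventually.of_forall fun ε => ae_of_all _ (bd ε)) hi
      refine ae_of_all _ fun p => ?_
      by_cases hp : p.1 - p.2 = 0
      · rw [sub_eq_zero.1 hp]; simp
      · simp_rw [div_eq_mul_inv]
        exact (svK_tendsto n s _ hp).const_mul _
    refine le_of_tendsto_of_tendsto (lim2.const_mul (4 * (q - 1) / q ^ 2 * (1 / 2))) lim ?_
    filter_upwards [self_mem_nhdsWithin] with ε hε
    obtain ⟨j1, j2⟩ := sv_sym n hn s hs0 hs1 ε hε u w hc M hM' hwc hwi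
    rw [j2, mul_comm (4 * (q - 1) / q ^ 2), mul_assoc]
    gcongr
    rw [← integral_const_mul]
    refine integral_mono ((hi.mono' (ms ε) (ae_of_all _ (bd ε))).const_mul _) j1 fun p => ?_
    simp only
    rw [← mul_assoc]
    exact mul_le_mul_of_nonneg_right (sv_point q hq _ _) (svK_nonneg ..)
  · rw [integral_undef hi, mul_zero]
    refine ge_of_tendsto lim ?_
    filter_upwards [self_mem_nhdsWithin] with ε hε
    obtain ⟨j1, j2⟩ := sv_sym n hn s hs0 hs1 ε hε u w hc M hM' hwc hwi
    rw [j2]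
    refine mul_nonneg (by norm_num) (integral_nonneg fun p => ?_)
    refine mul_nonneg ?_ (svK_nonneg ..)
    exact (mul_nonneg hk (sq_nonneg _)).trans (sv_point q hq _ _)

/-- **Stroock–Varopoulos inequality** on `ℝⁿ`: for `q > 1` and `u ∈ C_c^∞(ℝⁿ)`,
`∫ |u|^{q-2} u (-Δ)^s u ≥ (4(q-1)/q²)·(C(n,s)/2)·∬ (|u(x)|^{q/2}-|u(y)|^{q/2})²/|x-y|^{n+2s}`. -/
theorem Stroock_Varopoulos (n : ℕ) (hn : 1 ≤ n) (s : ℝ) (hs0 : 0 < s) (hs1 : s < 1)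
    (q : ℝ) (hq : 1 < q)
    (u : En n → ℝ) (hu : ContDiff ℝ (⊤ : ℕ∞) u) (huc : HasCompactSupport u) :
    (∫ x, |u x| ^ (q - 2) * u x * fracLap n s u x) ≥
      (4 * (q - 1) / q ^ 2) * (Cns n s / 2) *
        ∫ p : En n × En n,
          (|u p.1| ^ (q / 2) - |u p.2| ^ (q / 2)) ^ 2 / ‖p.1 - p.2‖ ^ ((n : ℝ) + 2 * s) := by
  have hC : 0 ≤ Cns n s := by
    unfold Cns
    have : 0 < Real.Gamma ((n : ℝ) / 2 + s) := Real.Gamma_pos_of_pos (by positivity)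
    have : 0 < Real.pi := Real.pi_pos
    positivity
  obtain ⟨F, B, hF, hB⟩ := sv_main n hn s hs0 hs1 u hu huc
  have h := sv_fin n hn s hs0 hs1 q hq u hu huc F B hF hB
  have hl : ∀ x, fracLap n s u x = Cns n s * F x := by
    intro x
    unfold fracLap
    simp_rw [sv_set_eq]
    rw [(hF x).limUnder_eq]
  simp_rw [hl]
  have e : ∫ x, |u x| ^ (q - 2) * u x * (Cns n s * F x) =
      Cns n s * ∫ x, |u x| ^ (q - 2) * u x * F x := by
    rw [← integral_const_mul]; congr 1; ext x; ring
  rw [e, ge_iff_le]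
  refine le_trans (le_of_eq ?_) (mul_le_mul_of_nonneg_left h hC)
  ring
end
end
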